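/- arXiv:1505.03697 — 4 statements merged into one kernel-verified Lean document; each statement's English description precedes it below -/
import Mathlib

section
/- Let T ⊊ G be a tile in a finite abelian group G. Then there is a set A with T ⊊ A ⊂ G having the following property: for any d₀ ≥ 1, there exist d ≥ d₀ and a family F of at least d₀ pairwise disjoint subsets of A^d such that for every subfamily S ⊂ F with |S| ≡ 1 (mod |T|), the set G × (A^d \ ⋃_{S ∈ S} S) ⊂ G^{d+1} is T-tilable. -/
def IsCopy {G : Type*} [AddCommGroup G] {d : ℕ} (T : Set G)
    (S : Set (Fin d → G)) : Prop :=
  ∃ (j : Fin d) (y : Fin d → G),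
    S = {z | ∃ t ∈ T, z = Function.update y j (y j + t)}

def Tilable {G : Type*} [AddCommGroup G] {d : ℕ} (T : Set G)
    (X : Set (Fin d → G)) : Prop :=
  ∃ P : Set (Set (Fin d → G)),
    (∀ S ∈ P, IsCopy T S) ∧ P.PairwiseDisjoint id ∧ ⋃₀ P = X

namespace CD

/-- adjacency in the grid `{0,1,2}^n` (each coordinate a path `0 - 1 - 2`). -/
def Adj {n : ℕ} (u v : Fin n → Fin 3) : Prop :=
  ∃ j, (∀ i, i ≠ j → u i = v i) ∧ ((u j = 1 ∧ v j ≠ 1) ∨ (u j ≠ 1 ∧ v j = 1))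

theorem Adj.symm {n : ℕ} {u v : Fin n → Fin 3} (h : Adj u v) : Adj v u := by
  obtain ⟨j, h1, h2⟩ := h
  exact ⟨j, fun i hi => (h1 i hi).symm, by tauto⟩

/-- the induced subgraph on `X` has a perfect matching. -/
def PM {n : ℕ} (X : Set (Fin n → Fin 3)) : Prop :=
  ∃ f : (Fin n → Fin 3) → (Fin n → Fin 3), ∀ u ∈ X, f u ∈ X ∧ f (f u) = u ∧ Adj u (f u)

theorem PM.union {n : ℕ} {X Y : Set (Fin n → Fin 3)} (hX : PM X) (hY : PM Y)
    (hd : ∀ u, u ∈ X → u ∈ Y → False) : PM (X ∪ Y) := by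
  classical
  obtain ⟨f, hf⟩ := hX
  obtain ⟨g, hg⟩ := hY
  refine ⟨fun u => if u ∈ X then f u else g u, ?_⟩
  intro u hu
  by_cases h : u ∈ X
  · obtain ⟨a, b, c⟩ := hf u h
    simp [h, a, b, c]
  · have hu' : u ∈ Y := by
      rcases hu with h' | h'
      · exact absurd h' h
      · exact h'
    obtain ⟨a, b, c⟩ := hg u hu'
    have : g u ∉ X := fun h' => hd _ h' a
    simp [h, this, a, b, c]

theorem PM.image {m n : ℕ} {X : Set (Fin m → Fin 3)} (hX : PM X)
    (φ : (Fin m → Fin 3) → (Fin n → Fin 3)) (hφ : Function.Injective φ)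
    (ha : ∀ u v, Adj u v → Adj (φ u) (φ v)) : PM (φ '' X) := by
  obtain ⟨f, hf⟩ := hX
  refine ⟨Function.extend φ (fun u => φ (f u)) id, ?_⟩
  rintro _ ⟨u, hu, rfl⟩
  obtain ⟨a, b, c⟩ := hf u hu
  simp only [hφ.extend_apply]
  exact ⟨⟨_, a, rfl⟩, by rw [b], ha _ _ c⟩

theorem PM.cross {m n : ℕ} (S : Set (Fin m → Fin 3))
    (φ ψ : (Fin m → Fin 3) → (Fin n → Fin 3)) (hφ : Function.Injective φ)
    (hψ : Function.Injective ψ) (hne : ∀ a b, φ a ≠ ψ b)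
    (ha : ∀ u, Adj (φ u) (ψ u)) : PM (φ '' S ∪ ψ '' S) := by
  have key : ∀ b, Function.extend φ ψ (Function.extend ψ φ id) (ψ b) = φ b := by
    intro b
    rw [Function.extend_apply' _ _ _ (by rintro ⟨a, h⟩; exact hne _ _ h), hψ.extend_apply]
  refine ⟨Function.extend φ ψ (Function.extend ψ φ id), ?_⟩
  rintro _ (⟨u, hu, rfl⟩ | ⟨u, hu, rfl⟩)
  · rw [hφ.extend_apply, key]
    exact ⟨Or.inr ⟨u, hu, rfl⟩, rfl, ha u⟩
  · rw [key, hφ.extend_apply]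
    exact ⟨Or.inl ⟨u, hu, rfl⟩, rfl, (ha u).symm⟩

def cn {n : ℕ} (k : Fin 3) (u : Fin n → Fin 3) : Fin (n + 1) → Fin 3 :=
  Fin.cons (α := fun _ => Fin 3) k u

theorem cn_inj {n : ℕ} {k l : Fin 3} {u v : Fin n → Fin 3} :
    cn k u = cn l v ↔ k = l ∧ u = v := by
  unfold cn
  exact Fin.cons_inj

theorem cn_injective {n : ℕ} (k : Fin 3) :
    Function.Injective (cn k : (Fin n → Fin 3) → _) := fun _ _ h => (cn_inj.1 h).2

theorem cn_surj {n : ℕ} (w : Fin (n + 1) → Fin 3) : ∃ k u, w = cn k u :=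
  ⟨w 0, Fin.tail w, (Fin.cons_self_tail w).symm⟩

theorem cn_adj {n : ℕ} (k : Fin 3) (u v : Fin n → Fin 3) (h : Adj u v) :
    Adj (cn k u) (cn k v) := by
  obtain ⟨j, h1, h2⟩ := h
  refine ⟨j.succ, ?_, by simpa [cn] using h2⟩
  intro i
  refine Fin.cases ?_ ?_ i
  · simp [cn]
  · intro i hi
    simpa [cn] using h1 i (by rintro rfl; exact hi rfl)

theorem cn_adj' {n : ℕ} (k l : Fin 3) (u : Fin n → Fin 3)
    (h : (k = 1 ∧ l ≠ 1) ∨ (k ≠ 1 ∧ l = 1)) : Adj (cn k u) (cn l u) := by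
  refine ⟨0, ?_, by simpa [cn] using h⟩
  intro i
  refine Fin.cases ?_ ?_ i
  · simp
  · intro i hi
    simp [cn]

/-- embeddings of `{0,1,2}^a` in `{0,1,2}^(a+c)` as the slice with constant `k`. -/
def emb {a : ℕ} (k : Fin 3) : (c : ℕ) → (Fin a → Fin 3) → (Fin (a + c) → Fin 3)
  | 0, u => u
  | c + 1, u => cn k (emb k c u)

theorem emb_injective {a : ℕ} (k : Fin 3) (c : ℕ) :
    Function.Injective (emb k c : (Fin a → Fin 3) → _) := by
  induction c with
  | zero => intro u v h; exact h
  | succ c ih => intro u v h; exact ih ((cn_inj.1 h).2)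

theorem emb_adj {a : ℕ} (k : Fin 3) (c : ℕ) (u v : Fin a → Fin 3) (h : Adj u v) :
    Adj (emb k c u) (emb k c v) := by
  induction c with
  | zero => exact h
  | succ c ih => exact cn_adj _ _ _ ih

theorem emb_ne_one {a : ℕ} (c : ℕ) (u : Fin a → Fin 3) (h : ∀ i, u i ≠ 1) :
    ∀ i, emb 0 c u i ≠ 1 := by
  induction c with
  | zero => exact h
  | succ c ih =>
    intro i
    refine Fin.cases ?_ ?_ i
    · simp [emb, cn]
    · intro i
      simpa [emb, cn] using ih i

theorem pm_compl_range {a : ℕ} (c : ℕ) :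
    PM {u : Fin (a + c) → Fin 3 | ∀ γ : Fin a → Fin 3, u ≠ emb 0 c γ} := by
  induction c with
  | zero => exact ⟨id, fun u hu => absurd rfl (hu u)⟩
  | succ c ih =>
    have h1 := ih.image (cn 0) (cn_injective 0) (cn_adj 0)
    have h2 := PM.cross (Set.univ : Set (Fin (a + c) → Fin 3)) (cn 1) (cn 2)
      (cn_injective 1) (cn_injective 2) (fun u v h => by simpa using (cn_inj.1 h).1)
      (fun u => cn_adj' _ _ _ (by decide))
    have h3 := h1.union h2 (by
      rintro _ ⟨u, hu, rfl⟩ (⟨v, hv, h⟩ | ⟨v, hv, h⟩)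
      · simpa using (cn_inj.1 h).1
      · simpa using (cn_inj.1 h).1)
    refine Eq.mp (congrArg PM ?_) h3
    symm
    ext w
    obtain ⟨k, u, rfl⟩ := cn_surj w
    fin_cases k <;> simp [emb, cn_inj]

def ev {a : ℕ} (k : Fin 3) (X : Finset (Fin a)) : Set (Fin a → Fin 3) :=
  {u | ∃ i ∈ X, u = Pi.single i k}

open Classical in
noncomputable def tog {a : ℕ} (u : Fin a → Fin 3) : Fin a → Fin 3 :=
  if h : {j | u j ≠ 0}.Nonempty then
    Function.update u h.some (Equiv.swap 1 2 (u h.some)) else u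

theorem sw_ne (x : Fin 3) (h : x ≠ 0) : Equiv.swap (1 : Fin 3) 2 x ≠ 0 := by
  revert x; decide

theorem sw_adj (x : Fin 3) (h : x ≠ 0) :
    (x = 1 ∧ Equiv.swap (1 : Fin 3) 2 x ≠ 1) ∨ (x ≠ 1 ∧ Equiv.swap (1 : Fin 3) 2 x = 1) := by
  revert x; decide

theorem tog_spec {a : ℕ} (u : Fin a → Fin 3) (hu : u ≠ 0) :
    tog u ≠ 0 ∧ tog (tog u) = u ∧ Adj u (tog u) := by
  have h : {j | u j ≠ 0}.Nonempty := by
    by_contra hc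
    apply hu
    funext j
    by_contra hj
    exact hc ⟨j, hj⟩
  have e : tog u = Function.update u h.some (Equiv.swap 1 2 (u h.some)) := by
    unfold tog; rw [dif_pos h]
  have hs : u h.some ≠ 0 := h.some_mem
  have supp : {j | tog u j ≠ 0} = {j | u j ≠ 0} := by
    ext j
    rw [e]
    by_cases hj : j = h.some
    · subst hj
      simp [sw_ne _ hs, hs]
    · simp [Function.update_of_ne hj]
  have h' : {j | tog u j ≠ 0}.Nonempty := by rw [supp]; exact h
  have hsome : h'.some = h.some := by
    simp only [supp]
  refine ⟨?_, ?_, ?_⟩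
  · intro h0
    obtain ⟨j, hj⟩ := h'
    exact hj (by rw [h0]; rfl)
  · have e2 : tog (tog u) = Function.update (tog u) h'.some (Equiv.swap 1 2 (tog u h'.some)) := by
      conv_lhs => unfold tog
      exact dif_pos h'
    rw [e2, hsome]
    nth_rewrite 2 [e]
    nth_rewrite 1 [e]
    simp
  · refine ⟨h.some, ?_, ?_⟩
    · intro i hi
      rw [e, Function.update_of_ne hi]
    · rw [e]
      simpa using sw_adj _ hs

theorem tog_single {a : ℕ} (i : Fin a) (k : Fin 3) (hk : k ≠ 0) :
    tog (Pi.single i k : Fin a → Fin 3) = Pi.single i (Equiv.swap 1 2 k) := by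
  have hS : {j | (Pi.single i k : Fin a → Fin 3) j ≠ 0} = {i} := by
    ext j
    by_cases hj : j = i
    · subst hj; simp [hk]
    · simp [hj]
  have h : {j | (Pi.single i k : Fin a → Fin 3) j ≠ 0}.Nonempty := by rw [hS]; simp
  have hi : h.some = i := by
    have h1 : h.some ∈ ({i} : Set (Fin a)) := hS ▸ h.some_mem
    exact h1
  unfold tog
  rw [dif_pos h, hi]
  simp [Pi.single]

theorem single_ne {a : ℕ} (i j : Fin a) (k l : Fin 3) (hk : k ≠ 0) (h : k ≠ l ∨ i ≠ j) :
    (Pi.single i k : Fin a → Fin 3) ≠ Pi.single j l := by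
  intro e
  have := congrFun e i
  by_cases hij : i = j
  · subst hij
    simp at this
    tauto
  · simp [hij] at this
    exact hk this

theorem pm_base {a : ℕ} (Z : Finset (Fin a)) (i : Fin a) (hi : i ∉ Z) :
    PM {u : Fin a → Fin 3 | u ∉ ev 2 (insert i Z) ∧ u ∉ ev 1 Z} := by
  have h1 : PM {u : Fin a → Fin 3 | u ≠ 0 ∧ u ∉ ev 2 (insert i Z) ∧ u ∉ ev 1 (insert i Z)} := by
    refine ⟨tog, ?_⟩
    rintro u ⟨hu, h2, h1⟩
    obtain ⟨p, q, r⟩ := tog_spec u hu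
    refine ⟨⟨p, ?_, ?_⟩, q, r⟩
    · rintro ⟨j, hj, e⟩
      apply h1
      refine ⟨j, hj, ?_⟩
      rw [← q, e, tog_single _ _ (by decide)]
      simp
    · rintro ⟨j, hj, e⟩
      apply h2
      refine ⟨j, hj, ?_⟩
      rw [← q, e, tog_single _ _ (by decide)]
      simp
  have z1 : ∀ (j : Fin a) (k : Fin 3), k ≠ 0 → (0 : Fin a → Fin 3) ≠ Pi.single j k := by
    intro j k hk e
    have := congrFun e j
    simp at this
    exact hk this.symm
  classical
  have h2 : PM {u : Fin a → Fin 3 | u = 0 ∨ u = Pi.single i 1} := by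
    have adj : Adj (0 : Fin a → Fin 3) (Pi.single i 1) := by
      refine ⟨i, fun j hj => by simp [hj], by simp⟩
    refine ⟨fun u => if u = 0 then Pi.single i 1 else 0, ?_⟩
    rintro u (rfl | rfl)
    · simp [adj]
    · simp [adj.symm]
  have h3 := h1.union h2 (by
    rintro u ⟨p, q, r⟩ (rfl | rfl)
    · exact p rfl
    · exact r ⟨i, by simp, rfl⟩)
  refine Eq.mp (congrArg PM ?_) h3
  symm
  ext u
  simp only [Set.mem_ofPred_eq, Set.mem_union]
  constructor
  · rintro ⟨p, q⟩
    by_cases h0 : u = 0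
    · exact Or.inr (Or.inl h0)
    by_cases hs : u = Pi.single i 1
    · exact Or.inr (Or.inr hs)
    refine Or.inl ⟨h0, p, ?_⟩
    rintro ⟨j, hj, e⟩
    rcases Finset.mem_insert.1 hj with rfl | hj
    · exact hs e
    · exact q ⟨j, hj, e⟩
  · rintro (⟨p, q, r⟩ | rfl | rfl)
    · refine ⟨q, ?_⟩
      rintro ⟨j, hj, e⟩
      exact r ⟨j, Finset.mem_insert_of_mem hj, e⟩
    · constructor
      · rintro ⟨j, hj, e⟩
        exact z1 _ _ (by decide) e
      · rintro ⟨j, hj, e⟩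
        exact z1 _ _ (by decide) e
    · constructor
      · rintro ⟨j, hj, e⟩
        exact single_ne _ _ _ _ (by decide) (Or.inl (by decide)) e
      · rintro ⟨j, hj, e⟩
        refine single_ne _ _ _ _ (by decide) (Or.inr ?_) e
        rintro rfl
        exact hi hj

theorem forall_ne {α : Type*} (S : Set α) (u : α) : (∀ x ∈ S, ¬ x = u) ↔ u ∉ S :=
  ⟨fun h hu => h u hu rfl, fun h x hx e => h (e ▸ hx)⟩

theorem pm_step {a c : ℕ} (E A E' : Set (Fin a → Fin 3)) (W : Set (Fin (a + c) → Fin 3))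
    (h1 : PM {u | u ∉ E ∧ u ∉ A}) (h2 : PM {u | u ∉ E' ∧ u ∉ A})
    (hd : ∀ u, u ∈ E → u ∈ A → False) (hd' : ∀ u, u ∈ E' → u ∈ A → False)
    (hW : ∀ u, u ∈ E' → emb 0 c u ∉ W)
    (h3 : PM {u : Fin (a + c) → Fin 3 | u ∉ emb 0 c '' E' ∧ u ∉ W}) :
    PM {u : Fin (a + (c + 1)) → Fin 3 | u ∉ emb 0 (c + 1) '' E ∧ u ∉ cn 2 '' W} := by
  have inj : ∀ k, Function.Injective (fun u : Fin a → Fin 3 => cn k (emb 0 c u)) :=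
    fun k => (cn_injective k).comp (emb_injective 0 c)
  have adj : ∀ k, ∀ u v : Fin a → Fin 3, Adj u v → Adj (cn k (emb 0 c u)) (cn k (emb 0 c v)) :=
    fun k u v h => cn_adj _ _ _ (emb_adj _ _ _ _ h)
  have hinj : ∀ {u v : Fin a → Fin 3}, emb 0 c u = emb 0 c v ↔ u = v :=
    fun {u v} => (emb_injective 0 c).eq_iff
  have p1 := (pm_compl_range (a := a) c).image (cn 0) (cn_injective 0) (cn_adj 0)
  have p2 := (pm_compl_range (a := a) c).image (cn 1) (cn_injective 1) (cn_adj 1)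
  have p3 := h1.image _ (inj 0) (adj 0)
  have p4 := PM.cross A _ _ (inj 0) (inj 1) (fun u v h => by simpa using (cn_inj.1 h).1)
      (fun u => cn_adj' _ _ _ (by decide))
  have p5 := h2.image _ (inj 1) (adj 1)
  have p6 := PM.cross E' _ _ (inj 1) (inj 2) (fun u v h => by simpa using (cn_inj.1 h).1)
      (fun u => cn_adj' _ _ _ (by decide))
  have p7 := h3.image (cn 2) (cn_injective 2) (cn_adj 2)
  have q2 := p1.union p2 (by
    rintro _ ⟨u, hu, rfl⟩ ⟨v, hv, h⟩
    simpa using (cn_inj.1 h).1)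
  have q3 := p3.union p4 (by
    rintro _ ⟨u, hu, rfl⟩ (⟨v, hv, h⟩ | ⟨v, hv, h⟩)
    · rw [cn_inj, hinj] at h
      exact hu.2 (h.2 ▸ hv)
    · simpa using (cn_inj.1 h).1)
  have q4 := p5.union p6 (by
    rintro _ ⟨u, hu, rfl⟩ (⟨v, hv, h⟩ | ⟨v, hv, h⟩)
    · rw [cn_inj, hinj] at h
      exact hu.1 (h.2 ▸ hv)
    · simpa using (cn_inj.1 h).1)
  have q5 := q3.union q4 (by
    rintro _ (⟨u, hu, rfl⟩ | ⟨u, hu, rfl⟩ | ⟨u, hu, rfl⟩)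
      (⟨v, hv, h⟩ | ⟨v, hv, h⟩ | ⟨v, hv, h⟩) <;> rw [cn_inj, hinj] at h <;>
      obtain ⟨h, rfl⟩ := h
    all_goals first
      | (exact absurd h (by decide))
      | (exact hv.2 hu)
      | (exact hd' _ hv hu))
  have q6 := q2.union p7 (by
    rintro _ (⟨u, hu, rfl⟩ | ⟨u, hu, rfl⟩) ⟨v, hv, h⟩ <;>
    simpa using (cn_inj.1 h).1)
  have q7 := q5.union q6 (by
    rintro _ ((⟨u, hu, rfl⟩ | ⟨u, hu, rfl⟩ | ⟨u, hu, rfl⟩) | (⟨u, hu, rfl⟩ | ⟨u, hu, rfl⟩ | ⟨u, hu, rfl⟩))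
      ((⟨v, hv, h⟩ | ⟨v, hv, h⟩) | ⟨v, hv, h⟩) <;> rw [cn_inj] at h <;>
      obtain ⟨h, rfl⟩ := h
    all_goals first
      | (exact absurd h (by decide))
      | (exact hv _ rfl)
      | (exact hv.1 ⟨_, hu, rfl⟩))
  refine Eq.mp (congrArg PM ?_) q7
  symm
  ext w
  obtain ⟨k, u, rfl⟩ := cn_surj w
  by_cases hr : ∃ γ, u = emb 0 c γ
  · obtain ⟨γ, rfl⟩ := hr
    have := hd γ
    have := hd' γ
    have := hW γ
    fin_cases k <;> simp [emb, cn_inj, hinj, forall_ne] <;> tauto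
  · have hr2 : ∀ γ, u ≠ emb 0 c γ := fun γ h => hr ⟨γ, h⟩
    have hr3 : ∀ γ, emb 0 c γ ≠ u := fun γ h => hr ⟨γ, h.symm⟩
    fin_cases k <;> simp [emb, cn_inj, hr2, hr3, forall_ne]

theorem ev_disj {a : ℕ} (X Y : Finset (Fin a)) (u : Fin a → Fin 3)
    (h : u ∈ ev 2 X) (h' : u ∈ ev 1 Y) : False := by
  obtain ⟨i, _, rfl⟩ := h
  obtain ⟨j, _, e⟩ := h'
  exact single_ne _ _ _ _ (by decide) (Or.inl (by decide)) e

theorem emb_disj {a : ℕ} (c : ℕ) (X Y : Finset (Fin a)) (u : Fin a → Fin 3)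
    (h : u ∈ ev 2 X) : emb 0 c u ∉ emb 2 c '' ev 1 Y := by
  rintro ⟨v, hv, e⟩
  cases c with
  | zero => exact ev_disj X Y u h (by rw [show u = v from e.symm]; exact hv)
  | succ c => exact absurd (cn_inj.1 e).1 (by decide)

theorem pm_main {a : ℕ} (c : ℕ) : ∀ X Y : Finset (Fin a), X.card = Y.card + 1 →
    (Y \ X).card ≤ c →
    PM {u : Fin (a + c) → Fin 3 | u ∉ emb 0 c '' ev 2 X ∧ u ∉ emb 2 c '' ev 1 Y} := by
  induction c with
  | zero =>
    intro X Y h1 h2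
    have hs : Y ⊆ X := by
      rw [← Finset.sdiff_eq_empty_iff_subset]
      exact Finset.card_eq_zero.1 (by omega)
    obtain ⟨i, hi, rfl⟩ : ∃ i, i ∉ Y ∧ insert i Y = X := by
      have hlt : Y ⊂ X := ⟨hs, fun h => by have := Finset.card_le_card h; omega⟩
      obtain ⟨i, hi, hi'⟩ := Finset.exists_of_ssubset hlt
      refine ⟨i, hi', Finset.eq_of_subset_of_card_le ?_ ?_⟩
      · exact Finset.insert_subset hi hs
      · rw [Finset.card_insert_of_notMem hi']; omega
    have := pm_base Y i hi
    refine Eq.mp (congrArg PM ?_) this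
    symm
    ext u
    simp [emb]
  | succ c ih =>
    intro X Y h1 h2
    have hnil : ∃ i ∈ X, i ∉ Y := by
      by_contra hc
      push Not at hc
      have := Finset.card_le_card (show X ⊆ Y from hc)
      omega
    obtain ⟨i, hi, hiY⟩ := hnil
    have hW : ∀ Y : Finset (Fin a), (emb 2 (c + 1) '' ev 1 Y : Set (Fin (a + (c + 1)) → Fin 3))
        = cn 2 '' (emb 2 c '' ev 1 Y) := by
      intro Y; rw [Set.image_image]; rfl
    have hX : insert i (X.erase i) = X := Finset.insert_erase hi
    obtain ⟨j, hj, hc'⟩ : ∃ j, j ∉ X.erase i ∧ (Y \ insert j (X.erase i)).card ≤ c := by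
      by_cases hY : (Y \ X).Nonempty
      · obtain ⟨j, hj⟩ := hY
        rw [Finset.mem_sdiff] at hj
        refine ⟨j, fun h => hj.2 (Finset.mem_of_mem_erase h), ?_⟩
        have hsub : Y \ insert j (X.erase i) ⊆ (Y \ X).erase j := by
          intro k hk
          simp only [Finset.mem_sdiff, Finset.mem_insert, Finset.mem_erase, not_or, not_and] at hk ⊢
          refine ⟨hk.2.1, hk.1, fun h => hk.2.2 ?_ h⟩
          rintro rfl
          exact hiY hk.1
        have := Finset.card_le_card hsub
        rw [Finset.card_erase_of_mem (Finset.mem_sdiff.2 hj)] at this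
        omega
      · refine ⟨i, by simp, ?_⟩
        rw [hX, Finset.not_nonempty_iff_eq_empty.1 hY]
        simp
    have hcX : (X.erase i).card = Y.card := by rw [Finset.card_erase_of_mem hi]; omega
    have := ih (insert j (X.erase i)) Y
      (by rw [Finset.card_insert_of_notMem hj]; omega) hc'
    have b1 := pm_base (X.erase i) i (by simp)
    rw [hX] at b1
    have b2 := pm_base (X.erase i) j hj
    rw [hW]
    exact pm_step _ _ _ _ b1 b2 (ev_disj _ _) (ev_disj _ _) (fun u hu => emb_disj _ _ _ u hu) this

theorem tilable_of_fun {G : Type*} [AddCommGroup G] {d : ℕ} (T : Set G) (X : Set (Fin d → G))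
    (τ : (Fin d → G) → Set (Fin d → G))
    (h : ∀ z ∈ X, z ∈ τ z ∧ IsCopy T (τ z) ∧ τ z ⊆ X ∧ ∀ y ∈ τ z, τ y = τ z) :
    Tilable T X := by
  refine ⟨τ '' X, ?_, ?_, ?_⟩
  · rintro _ ⟨z, hz, rfl⟩
    exact (h z hz).2.1
  · rintro _ ⟨z, hz, rfl⟩ _ ⟨w, hw, rfl⟩ hne
    refine Set.disjoint_left.2 ?_
    intro y hy hy'
    exact hne (((h z hz).2.2.2 y hy).symm.trans ((h w hw).2.2.2 y hy'))
  · ext y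
    constructor
    · rintro ⟨_, ⟨z, hz, rfl⟩, hy⟩
      exact (h z hz).2.2.1 hy
    · intro hy
      exact ⟨_, ⟨y, hy, rfl⟩, (h y hy).1⟩

open Classical in
noncomputable def kap {G : Type*} [AddCommGroup G] (T : Set G) (x : G) (a : G) : Fin 3 :=
  if a ∉ T then 2 else if a - x ∈ T then 1 else 0

theorem kap_cases {G : Type*} [AddCommGroup G] (T : Set G) (x : G) (p q : Fin 3)
    (h : (p = 1 ∧ q ≠ 1) ∨ (p ≠ 1 ∧ q = 1)) :
    ∃ b : G, ∀ a : G, ((a ∈ T ∨ a - x ∈ T) ∧ (kap T x a = p ∨ kap T x a = q)) ↔ a - b ∈ T := by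
  have h' : (p = 0 ∧ q = 1) ∨ (p = 1 ∧ q = 0) ∨ (p = 2 ∧ q = 1) ∨ (p = 1 ∧ q = 2) := by
    revert p q; decide
  rcases h' with ⟨rfl, rfl⟩ | ⟨rfl, rfl⟩ | ⟨rfl, rfl⟩ | ⟨rfl, rfl⟩
  · refine ⟨0, fun a => ?_⟩
    unfold kap
    by_cases h1 : a ∈ T <;> by_cases h2 : a - x ∈ T <;> simp [h1, h2]
  · refine ⟨0, fun a => ?_⟩
    unfold kap
    by_cases h1 : a ∈ T <;> by_cases h2 : a - x ∈ T <;> simp [h1, h2]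
  · refine ⟨x, fun a => ?_⟩
    unfold kap
    by_cases h1 : a ∈ T <;> by_cases h2 : a - x ∈ T <;> simp [h1, h2]
  · refine ⟨x, fun a => ?_⟩
    unfold kap
    by_cases h1 : a ∈ T <;> by_cases h2 : a - x ∈ T <;> simp [h1, h2]

theorem tile_main {G : Type*} [AddCommGroup G] (T : Set G) (x : G) {d : ℕ}
    (R Ws : Set (Fin d → Fin 3)) (off : (Fin d → Fin 3) → G)
    (hpm : ∀ g : G, PM {u | u ∉ R ∧ ¬ (u ∈ Ws ∧ g - off u ∈ T)}) :
    Tilable T {z : Fin (d + 1) → G | (∀ j, Fin.tail z j ∈ T ∨ Fin.tail z j - x ∈ T) ∧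
      (fun j => kap T x (Fin.tail z j)) ∉ R} := by
  classical
  choose f hf using hpm
  let K : (Fin (d + 1) → G) → (Fin d → Fin 3) := fun z j => kap T x (Fin.tail z j)
  let τ : (Fin (d + 1) → G) → Set (Fin (d + 1) → G) := fun z =>
    if K z ∈ Ws ∧ z 0 - off (K z) ∈ T then
      {y | Fin.tail y = Fin.tail z ∧ y 0 - off (K z) ∈ T}
    else {y | y 0 = z 0 ∧ (∀ j : Fin d, y j.succ ∈ T ∨ y j.succ - x ∈ T) ∧
      (K y = K z ∨ K y = f (z 0) (K z)) ∧
      ∀ i, K z i = f (z 0) (K z) i → Fin.tail y i = Fin.tail z i}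
  have τ1 : ∀ z, (K z ∈ Ws ∧ z 0 - off (K z) ∈ T) →
      τ z = {y | Fin.tail y = Fin.tail z ∧ y 0 - off (K z) ∈ T} := fun z h => if_pos h
  have τ2 : ∀ z, ¬ (K z ∈ Ws ∧ z 0 - off (K z) ∈ T) →
      τ z = {y | y 0 = z 0 ∧ (∀ j : Fin d, y j.succ ∈ T ∨ y j.succ - x ∈ T) ∧
      (K y = K z ∨ K y = f (z 0) (K z)) ∧
      ∀ i, K z i = f (z 0) (K z) i → Fin.tail y i = Fin.tail z i} := fun z h => if_neg h
  refine tilable_of_fun T _ τ ?_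
  rintro z ⟨hzA, hzR⟩
  change K z ∉ R at hzR
  by_cases hD : K z ∈ Ws ∧ z 0 - off (K z) ∈ T
  · rw [τ1 z hD]
    refine ⟨⟨rfl, hD.2⟩, ?_, ?_, ?_⟩
    · refine ⟨0, Function.update z 0 (off (K z)), ?_⟩
      ext y
      constructor
      · rintro ⟨h1, h2⟩
        refine ⟨_, h2, ?_⟩
        funext i
        refine Fin.cases ?_ ?_ i
        · simp
        · intro i
          simpa [Fin.tail] using congrFun h1 i
      · rintro ⟨t, ht, rfl⟩
        constructor
        · funext i
          simp [Fin.tail]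
        · simpa using ht
    · rintro y ⟨h1, h2⟩
      have e : K y = K z := by funext j; simp only [K, h1]
      refine ⟨by rw [h1]; exact hzA, ?_⟩
      change K y ∉ R
      rw [e]; exact hzR
    · rintro y ⟨h1, h2⟩
      have e : K y = K z := by funext j; simp only [K, h1]
      rw [τ1 y (by rw [e]; exact ⟨hD.1, h2⟩), e, h1]
  · obtain ⟨⟨hvR, hvD⟩, hvv, hadj⟩ := hf (z 0) (K z) ⟨hzR, hD⟩
    rw [τ2 z hD]
    refine ⟨⟨rfl, hzA, Or.inl rfl, fun _ _ => rfl⟩, ?_, ?_, ?_⟩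
    · obtain ⟨j, hj, hj2⟩ := hadj
      obtain ⟨b, hb⟩ := kap_cases T x _ _ hj2
      have hne : K z j ≠ f (z 0) (K z) j := by
        rcases hj2 with ⟨p, q⟩ | ⟨p, q⟩
        · rw [p]; exact fun h => q h.symm
        · rw [q]; exact p
      refine ⟨j.succ, Function.update z j.succ b, ?_⟩
      ext y
      constructor
      · rintro ⟨h1, h2, h3, h4⟩
        refine ⟨y j.succ - b, (hb (y j.succ)).1 ⟨h2 j, ?_⟩, ?_⟩
        · rcases h3 with h3 | h3
          · exact Or.inl (congrFun h3 j)
          · exact Or.inr (congrFun h3 j)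
        · funext i
          refine Fin.cases ?_ ?_ i
          · simpa [Function.update_apply, Fin.succ_ne_zero, eq_comm] using h1
          · intro i
            by_cases hi : i = j
            · subst hi
              simp [Fin.tail]
            · have := h4 i (hj i hi)
              simpa [Function.update_apply, hi, Fin.tail] using this
      · rintro ⟨t, ht, rfl⟩
        have hcoord : ∀ i, i ≠ j → Fin.tail (α := fun _ => G) (Function.update (Function.update z j.succ b) j.succ
            (Function.update z j.succ b j.succ + t)) i = Fin.tail z i := by
          intro i hi
          simp [Fin.tail, Function.update_apply, hi]
        have hcj : Fin.tail (α := fun _ => G) (Function.update (Function.update z j.succ b) j.succ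
            (Function.update z j.succ b j.succ + t)) j = b + t := by
          simp [Fin.tail]
        have hbt := (hb (b + t)).2 (by simpa using ht)
        refine ⟨?_, ?_, ?_, ?_⟩
        · simp [Function.update_apply, (Fin.succ_ne_zero j).symm]
        · intro i
          by_cases hi : i = j
          · subst hi
            have h0 := hbt.1
            rw [← hcj] at h0
            exact h0
          · have h0 := hzA i
            rw [← hcoord i hi] at h0
            exact h0
        · rcases hbt.2 with h | h
          · left
            funext i
            by_cases hi : i = j
            · subst hi; simp only [K, hcj]; exact h
            · simp only [K, hcoord i hi]
          · right
            funext i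
            by_cases hi : i = j
            · subst hi; simp only [K, hcj]; exact h
            · rw [← hj i hi]
              simp only [K, hcoord i hi]
        · intro i hi
          refine hcoord i ?_
          rintro rfl
          exact hne hi
    · rintro y ⟨h1, h2, h3, h4⟩
      refine ⟨h2, ?_⟩
      change K y ∉ R
      rcases h3 with h3 | h3
      · rw [h3]; exact hzR
      · rw [h3]; exact hvR
    · rintro y ⟨h1, h2, h3, h4⟩
      rcases h3 with h3 | h3
      · rw [τ2 y (by rw [h3, h1]; exact hD), h3, h1]
        ext w
        constructor
        · rintro ⟨p, q, r, s⟩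
          exact ⟨p, q, r, fun i hi => (s i hi).trans (h4 i hi)⟩
        · rintro ⟨p, q, r, s⟩
          exact ⟨p, q, r, fun i hi => (s i hi).trans (h4 i hi).symm⟩
      · rw [τ2 y (by rw [h3, h1]; exact hvD), h3, h1, hvv]
        ext w
        constructor
        · rintro ⟨p, q, r, s⟩
          exact ⟨p, q, r.symm, fun i hi => (s i hi.symm).trans (h4 i hi)⟩
        · rintro ⟨p, q, r, s⟩
          exact ⟨p, q, r.symm, fun i hi => (s i hi.symm).trans (h4 i hi.symm).symm⟩

theorem tilable_singleton {G : Type*} [AddCommGroup G] {d : ℕ} (s : G)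
    (X : Set (Fin (d + 1) → G)) : Tilable {s} X := by
  refine tilable_of_fun _ X (fun z => {z}) ?_
  intro z hz
  refine ⟨rfl, ⟨0, Function.update z 0 (z 0 - s), ?_⟩, by simpa using hz, ?_⟩
  · ext y
    simp
  · rintro y rfl
    rfl

theorem exists_shift {G : Type*} [AddCommGroup G] [Fintype G]
    (T : Set G) (hTne : T.Nonempty) (hTprop : T ≠ Set.univ) :
    ∃ x s p : G, s ∉ T ∧ s - x ∈ T ∧ p ∈ T ∧ p - x ∉ T := by
  obtain ⟨t, ht⟩ := hTne
  obtain ⟨s, hs⟩ := (Set.ne_univ_iff_exists_notMem T).1 hTprop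
  have hsx : s - (s - t) = t := by abel
  by_cases h : ∃ p, p ∈ T ∧ p - (s - t) ∉ T
  · obtain ⟨p, hp⟩ := h
    exact ⟨s - t, s, p, hs, by rw [hsx]; exact ht, hp⟩
  · exfalso
    push Not at h
    have hsub : (fun p => p - (s - t)) '' T ⊆ T := by
      rintro _ ⟨p, hp, rfl⟩
      exact h p hp
    have heq := Set.eq_of_subset_of_ncard_le hsub
      (by rw [Set.ncard_image_of_injective _ (sub_left_injective)]) T.toFinite
    have : t ∈ (fun p => p - (s - t)) '' T := by rw [heq]; exact ht
    obtain ⟨p, hp, e⟩ := this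
    have : p = s := by
      have e' : p - (s - t) = t := e
      rw [sub_eq_iff_eq_add] at e'
      rw [e']; abel
    exact hs (this ▸ hp)

theorem card_Y {G : Type*} [AddCommGroup G] [Fintype G] (T : Set G) {a d₀ : ℕ}
    (φ : Fin a ≃ Fin d₀ × G) (m : ℕ) (hm : m ≤ d₀) (g : G) (Y : Finset (Fin a))
    (hY : ∀ h, h ∈ Y ↔ ((φ h).1.val < m ∧ g - (φ h).2 ∈ T)) : Y.card = m * T.ncard := by
  classical
  have e1 : Y.map φ.toEmbedding =
      (Finset.univ.filter fun k : Fin d₀ => k.val < m) ×ˢ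
        (Finset.univ.filter fun y : G => g - y ∈ T) := by
    ext ⟨k, y⟩
    simp only [Finset.mem_map_equiv, hY, Finset.mem_product, Finset.mem_filter, Finset.mem_univ,
      true_and, Equiv.apply_symm_apply]
  have e2 : (Finset.univ.filter fun y : G => g - y ∈ T).card = T.ncard := by
    have : ((Finset.univ.filter fun y : G => g - y ∈ T) : Finset G) =
        (Finset.univ.filter fun y : G => y ∈ T).map (Equiv.subLeft g).toEmbedding := by
      ext y
      simp [Finset.mem_map_equiv, Equiv.subLeft, sub_eq_add_neg, add_comm]
    rw [this, Finset.card_map, Set.ncard_eq_toFinset_card']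
    congr 1
    ext y; simp
  have e3 : (Finset.univ.filter fun k : Fin d₀ => k.val < m).card = m := by
    rw [Fin.card_filter_val_lt]; omega
  rw [← Finset.card_map φ.toEmbedding, e1, Finset.card_product, e2, e3]

end CD

/-- for any proper tile `T ⊊ G` in a finite abelian group,
there is `A` with `T ⊊ A ⊆ G` such that for any `d₀ ≥ 1` there are `d ≥ d₀`
and a family `F` of at least `d₀` pairwise disjoint subsets of `A^d` so that
`G × (A^d \ ⋃_{S ∈ 𝒮} S)` is `T`-tilable whenever `𝒮 ⊆ F` has
`|𝒮| ≡ 1 (mod |T|)`. -/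
theorem constructDenser {G : Type*} [AddCommGroup G] [Fintype G]
    (T : Set G) (hTne : T.Nonempty) (hTprop : T ≠ Set.univ) :
    ∃ A : Set G, T ⊂ A ∧
      ∀ d₀ : ℕ, 1 ≤ d₀ →
        ∃ d : ℕ, d₀ ≤ d ∧
          ∃ F : Finset (Set (Fin d → G)),
            d₀ ≤ F.card ∧
            (∀ S ∈ F, S ⊆ {z : Fin d → G | ∀ j, z j ∈ A}) ∧
            ((F : Set (Set (Fin d → G))).PairwiseDisjoint id) ∧
            (∀ 𝒮 : Finset (Set (Fin d → G)), 𝒮 ⊆ F →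
              𝒮.card % T.ncard = 1 % T.ncard →
              Tilable T
                {z : Fin (d + 1) → G |
                  Fin.tail z ∈
                    ({w : Fin d → G | ∀ j, w j ∈ A} \ ⋃ S ∈ 𝒮, S)}) := by
  classical
  obtain ⟨x, s, p, hs, hsx, hp, hpx⟩ := CD.exists_shift T hTne hTprop
  refine ⟨{a | a ∈ T ∨ a - x ∈ T}, ⟨fun a ha => Or.inl ha, fun h => hs (h (Or.inr hsx))⟩, ?_⟩
  intro d₀ hd₀
  obtain ⟨a, ⟨φ⟩⟩ : ∃ a, Nonempty (Fin a ≃ Fin d₀ × G) :=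
    ⟨_, ⟨(Fintype.equivFin (Fin d₀ × G)).symm⟩⟩
  have inj0 : Function.Injective (fun k : Fin d₀ => φ.symm (k, 0)) := by
    intro k l h
    simpa using h
  have ha : d₀ ≤ a := by
    simpa using Fintype.card_le_of_injective _ inj0
  -- cells
  let cell : Fin a → (Fin (a + a) → Fin 3) := fun i => CD.emb 0 a (Pi.single i 2)
  have cell_inj : Function.Injective cell := by
    intro i j h
    by_contra hij
    exact CD.single_ne i j 2 2 (by decide) (Or.inr hij) (CD.emb_injective 0 a h)
  let wcell : Fin a → (Fin (a + a) → Fin 3) := fun i => CD.emb 2 a (Pi.single i 1)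
  have wcell_inj : Function.Injective wcell := by
    intro i j h
    by_contra hij
    exact CD.single_ne i j 1 1 (by decide) (Or.inr hij) (CD.emb_injective 2 a h)
  let blk : Fin a → Set (Fin (a + a) → G) := fun i =>
    {w | (∀ j, w j ∈ T ∨ w j - x ∈ T) ∧ (fun j => CD.kap T x (w j)) = cell i}
  have blk_disj : ∀ i j, i ≠ j → Disjoint (blk i) (blk j) := by
    intro i j hij
    refine Set.disjoint_left.2 ?_
    intro w hw hw'
    exact hij (cell_inj (hw.2.symm.trans hw'.2))
  have blk_ne : ∀ i, (blk i).Nonempty := by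
    intro i
    have h1 : ∀ j, cell i j ≠ 1 := by
      refine CD.emb_ne_one a _ ?_
      intro j
      by_cases hj : j = i
      · subst hj; simp
      · simp [hj]
    refine ⟨fun j => if cell i j = 0 then p else s, ?_, ?_⟩
    · intro j
      by_cases h : cell i j = 0
      · simp [h, hp]
      · simp [h, hsx]
    · funext j
      by_cases h : cell i j = 0
      · simp [h, CD.kap, hp, hpx]
      · have h2 : ∀ y : Fin 3, y ≠ 1 → y ≠ 0 → 2 = y := by decide
        simp only [h, if_false, CD.kap, hs, not_false_eq_true, if_true]
        exact h2 _ (h1 j) h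
  have blk_inj : Function.Injective blk := by
    intro i j h
    by_contra hij
    have := blk_disj i j hij
    rw [h, disjoint_self] at this
    exact (blk_ne j).ne_empty this
  let I0 : Finset (Fin a) := Finset.univ.image (fun k : Fin d₀ => φ.symm (k, 0))
  have hI0 : I0.card = d₀ := by
    rw [Finset.card_image_of_injective _ inj0]; simp
  refine ⟨a + a, by omega, I0.image blk, ?_, ?_, ?_, ?_⟩
  · rw [Finset.card_image_of_injective _ blk_inj, hI0]
  · intro S hS
    obtain ⟨i, _, rfl⟩ := Finset.mem_image.1 hS
    exact fun w hw => hw.1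
  · intro S hS S' hS' hne
    obtain ⟨i, _, rfl⟩ := Finset.mem_image.1 (Finset.mem_coe.1 hS)
    obtain ⟨j, _, rfl⟩ := Finset.mem_image.1 (Finset.mem_coe.1 hS')
    exact blk_disj i j (fun h => hne (by rw [h]))
  · intro 𝒮 h𝒮 hcard
    let X : Finset (Fin a) := I0.filter (fun i => blk i ∈ 𝒮)
    have hX𝒮 : 𝒮 = X.image blk := by
      ext S
      simp only [X, Finset.mem_image, Finset.mem_filter]
      constructor
      · intro hS
        obtain ⟨i, hi, rfl⟩ := Finset.mem_image.1 (h𝒮 hS)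
        exact ⟨i, ⟨hi, hS⟩, rfl⟩
      · rintro ⟨i, ⟨_, hi⟩, rfl⟩
        exact hi
    have hXc : 𝒮.card = X.card := by
      rw [hX𝒮, Finset.card_image_of_injective _ blk_inj]
    have hXd : X.card ≤ d₀ := hI0 ▸ Finset.card_le_card (Finset.filter_subset _ _)
    have ht : 0 < T.ncard := (Set.ncard_pos T.toFinite).2 hTne
    rw [hXc] at hcard
    by_cases hX0 : X.card = 0
    · have ht1 : T.ncard = 1 := by
        rw [hX0, Nat.zero_mod] at hcard
        exact Nat.dvd_one.1 (Nat.dvd_of_mod_eq_zero hcard.symm)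
      obtain ⟨q, rfl⟩ := Set.ncard_eq_one.1 ht1
      exact CD.tilable_singleton _ _
    obtain ⟨m, hm⟩ : T.ncard ∣ X.card - 1 :=
      (Nat.modEq_iff_dvd' (by omega)).1 (show 1 ≡ X.card [MOD T.ncard] from hcard.symm)
    have hmle : m ≤ T.ncard * m := Nat.le_mul_of_pos_left m ht
    have hmd : m ≤ d₀ := by omega
    have key := CD.tile_main T x (CD.emb 0 a '' CD.ev 2 X)
      {u | ∃ h, (φ h).1.val < m ∧ u = wcell h}
      (Function.extend wcell (fun h => (φ h).2) 0) (by
        intro g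
        let Y : Finset (Fin a) :=
          Finset.univ.filter (fun h => (φ h).1.val < m ∧ g - (φ h).2 ∈ T)
        have hYc : Y.card = m * T.ncard := CD.card_Y T φ m hmd g Y (by simp [Y])
        have := CD.pm_main a X Y (by rw [hYc, Nat.mul_comm]; omega)
          ((Finset.card_le_univ _).trans (by simp))
        refine Eq.mp (congrArg CD.PM ?_) this
        ext u
        refine and_congr Iff.rfl (not_congr ?_)
        constructor
        · rintro ⟨_, ⟨h, hh, rfl⟩, rfl⟩
          have hh2 := (Finset.mem_filter.1 hh).2
          refine ⟨⟨h, hh2.1, rfl⟩, ?_⟩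
          rw [show CD.emb 2 a (Pi.single h 1) = wcell h from rfl, wcell_inj.extend_apply]
          exact hh2.2
        · rintro ⟨⟨h, hh, rfl⟩, h2⟩
          rw [wcell_inj.extend_apply] at h2
          exact ⟨_, ⟨h, Finset.mem_filter.2 ⟨Finset.mem_univ _, hh, h2⟩, rfl⟩, rfl⟩)
    refine Eq.mp (congrArg (Tilable T) ?_) key
    ext z
    refine and_congr_right fun hz => not_congr ?_
    rw [hX𝒮]
    simp only [Set.mem_iUnion, Finset.mem_image, exists_prop]
    constructor
    · rintro ⟨_, ⟨i, hi, rfl⟩, e⟩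
      exact ⟨_, ⟨i, hi, rfl⟩, hz, e.symm⟩
    · rintro ⟨_, ⟨i, hi, rfl⟩, _, e⟩
      exact ⟨_, ⟨i, hi, rfl⟩, e.symm⟩
end

section
/- Let G, G₁, ..., G_m, H₁, ..., H_n be abelian groups with tiles A ⊂ B ⊂ C ⊂ G, T_i ⊂ B_i ⊂ G_i, and U_i ⊂ C_i ⊂ H_i. Suppose B₁ × ⋯ × B_m × B is (T₁, ..., T_m, A)-tilable, and C₁ × ⋯ × C_n × C^d is (U₁, ..., U_n, B, ..., B)-tilable (with d copies of B). Then B₁ × ⋯ × B_m × C₁ × ⋯ × C_n × C^d is (T₁, ..., T_m, U₁, ..., U_n, A, ..., A)-tilable (with d copies of A). -/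
universe u

/-- A copy of the tile `T j ⊆ G j` in the product `Π i, G i`, placed in
coordinate `j` and translated by `y`. -/
def IsCopyD {ι : Type*} [DecidableEq ι] {G : ι → Type*}
    [∀ i, AddCommGroup (G i)] (T : ∀ i, Set (G i))
    (S : Set (∀ i, G i)) : Prop :=
  ∃ (j : ι) (y : ∀ i, G i),
    S = {z | ∃ t ∈ T j, z = Function.update y j (y j + t)}

/-- `X` is `(T₁, …)`-tilable: it partitions into copies of the tiles `T i`,
each placed in its own coordinate. -/
def TilableD {ι : Type*} [DecidableEq ι] {G : ι → Type*}
    [∀ i, AddCommGroup (G i)] (T : ∀ i, Set (G i))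
    (X : Set (∀ i, G i)) : Prop :=
  ∃ P : Set (Set (∀ i, G i)),
    (∀ S ∈ P, IsCopyD T S) ∧ P.PairwiseDisjoint id ∧ ⋃₀ P = X

instance sumElimAddCommGroup {α β : Type*} (F : α → Type u) (G : β → Type u)
    [∀ a, AddCommGroup (F a)] [∀ b, AddCommGroup (G b)] :
    ∀ i : α ⊕ β, AddCommGroup (Sum.elim F G i) := fun i =>
  match i with
  | .inl a => inferInstanceAs (AddCommGroup (F a))
  | .inr b => inferInstanceAs (AddCommGroup (G b))

theorem tilableD_iUnion {ι : Type*} [DecidableEq ι] {G : ι → Type*}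
    [∀ i, AddCommGroup (G i)] (T : ∀ i, Set (G i)) {κ : Type*} (K : Set κ)
    (X : κ → Set (∀ i, G i)) (hd : K.PairwiseDisjoint X)
    (h : ∀ k ∈ K, TilableD T (X k)) : TilableD T (⋃ k ∈ K, X k) := by
  choose! P hP1 hP2 hP3 using h
  refine ⟨⋃ k ∈ K, P k, ?_, ?_, ?_⟩
  · intro S hS
    simp only [Set.mem_iUnion] at hS
    obtain ⟨k, hk, hS⟩ := hS
    exact hP1 k hk S hS
  · intro S hS S' hS' hne
    simp only [Set.mem_iUnion] at hS hS'
    obtain ⟨k, hk, hS⟩ := hS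
    obtain ⟨k', hk', hS'⟩ := hS'
    by_cases hkk : k = k'
    · subst hkk
      exact hP2 k hk hS hS' hne
    · refine (hd hk hk' hkk).mono ?_ ?_
      · rw [← hP3 k hk]; exact Set.subset_sUnion_of_mem hS
      · rw [← hP3 k' hk']; exact Set.subset_sUnion_of_mem hS'
  · ext z
    simp only [Set.mem_sUnion, Set.mem_iUnion]
    constructor
    · rintro ⟨S, ⟨k, hk, hS⟩, hz⟩
      exact ⟨k, hk, by rw [← hP3 k hk]; exact ⟨S, hS, hz⟩⟩
    · rintro ⟨k, hk, hz⟩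
      rw [← hP3 k hk] at hz
      obtain ⟨S, hS, hz⟩ := hz
      exact ⟨S, ⟨k, hk, hS⟩, hz⟩

theorem tilableD_single {ι : Type*} [DecidableEq ι] {G : ι → Type*}
    [∀ i, AddCommGroup (G i)] (T : ∀ i, Set (G i)) (S : Set (∀ i, G i))
    (h : IsCopyD T S) : TilableD T S :=
  ⟨{S}, by rintro _ rfl; exact h, by simp, by simp⟩

theorem tilableD_image {ι : Type*} [DecidableEq ι] {G : ι → Type*}
    [∀ i, AddCommGroup (G i)] (T : ∀ i, Set (G i))
    {ι' : Type*} [DecidableEq ι'] {G' : ι' → Type*}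
    [∀ i, AddCommGroup (G' i)] (T' : ∀ i, Set (G' i))
    (f : (∀ i, G i) → ∀ i, G' i) (hf : Function.Injective f)
    (hc : ∀ S, IsCopyD T S → IsCopyD T' (f '' S))
    (X : Set (∀ i, G i)) (h : TilableD T X) : TilableD T' (f '' X) := by
  obtain ⟨P, h1, h2, rfl⟩ := h
  refine ⟨(fun S => f '' S) '' P, ?_, ?_, ?_⟩
  · rintro _ ⟨S, hS, rfl⟩
    exact hc S (h1 S hS)
  · rintro _ ⟨S, hS, rfl⟩ _ ⟨S', hS', rfl⟩ hne
    exact (Set.disjoint_image_iff hf).2 (h2 hS hS' (fun e => hne (by rw [e])))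
  · rw [Set.image_sUnion]

/-- If `f` moves the coordinate `j` translations to coordinate `j'` translations
then it maps copies to copies. -/
theorem image_copy {ι : Type*} [DecidableEq ι] {G : ι → Type*}
    [∀ i, AddCommGroup (G i)] (T : ∀ i, Set (G i))
    {ι' : Type*} [DecidableEq ι'] {G' : ι' → Type*}
    [∀ i, AddCommGroup (G' i)] (T' : ∀ i, Set (G' i))
    (f : (∀ i, G i) → ∀ i, G' i)
    (h : ∀ j y, ∃ j', ∃ e : G j → G' j', T' j' = e '' T j ∧
      ∀ t, f (Function.update y j (y j + t)) =
        Function.update (f y) j' (f y j' + e t)) (S) (hS : IsCopyD T S) :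
    IsCopyD T' (f '' S) := by
  obtain ⟨j, y, rfl⟩ := hS
  obtain ⟨j', e, he, hu⟩ := h j y
  refine ⟨j', f y, ?_⟩
  ext z
  constructor
  · rintro ⟨_, ⟨t, ht, rfl⟩, rfl⟩
    exact ⟨e t, by rw [he]; exact ⟨t, ht, rfl⟩, hu t⟩
  · rintro ⟨t', ht', rfl⟩
    rw [he] at ht'
    obtain ⟨t, ht, rfl⟩ := ht'
    exact ⟨_, ⟨t, ht, rfl⟩, hu t⟩

/-- Gluing of two dependent functions. -/
def glue {α β : Type*} {F : α → Type u} {K : β → Type u}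
    (b : ∀ a, F a) (w : ∀ c, K c) : ∀ i, Sum.elim F K i
  | .inl a => b a
  | .inr c => w c

theorem glue_update_inl {α β : Type*} [DecidableEq α] [DecidableEq β]
    {F : α → Type u} {K : β → Type u}
    (b : ∀ a, F a) (w : ∀ c, K c) (a : α) (x : F a) :
    glue (Function.update b a x) w =
      Function.update (β := Sum.elim F K) (glue b w) (.inl a) x := by
  funext i
  rcases i with i | i
  · by_cases h : i = a
    · subst h
      exact (Function.update_self (β := F) i x b).trans
        (Function.update_self (β := Sum.elim F K) (.inl i) x (glue b w)).symm
    · exact (Function.update_of_ne (β := F) h x b).trans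
        (Function.update_of_ne (β := Sum.elim F K) (a := .inl i) (a' := .inl a)
          (fun e => h (by simpa using e)) x (glue b w)).symm
  · exact (Function.update_of_ne (β := Sum.elim F K) (a := .inr i) (a' := .inl a)
      (by simp) x (glue b w)).symm

theorem glue_update_inr {α β : Type*} [DecidableEq α] [DecidableEq β]
    {F : α → Type u} {K : β → Type u}
    (b : ∀ a, F a) (w : ∀ c, K c) (c : β) (x : K c) :
    glue b (Function.update w c x) =
      Function.update (β := Sum.elim F K) (glue b w) (.inr c) x := by
  funext i
  rcases i with i | i
  · exact (Function.update_of_ne (β := Sum.elim F K) (a := .inl i) (a' := .inr c)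
      (by simp) x (glue b w)).symm
  · by_cases h : i = c
    · subst h
      exact (Function.update_self (β := K) i x w).trans
        (Function.update_self (β := Sum.elim F K) (.inr i) x (glue b w)).symm
    · exact (Function.update_of_ne (β := K) h x w).trans
        (Function.update_of_ne (β := Sum.elim F K) (a := .inr i) (a' := .inr c)
          (fun e => h (by simpa using e)) x (glue b w)).symm

theorem glue_inj {α β : Type*} {F : α → Type u} {K : β → Type u}
    {b b' : ∀ a, F a} {w w' : ∀ c, K c} (h : glue b w = glue b' w') :
    b = b' ∧ w = w' :=
  ⟨funext fun a => congrFun h (.inl a), funext fun c => congrFun h (.inr c)⟩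

theorem glue_eta {α β : Type*} {F : α → Type u} {K : β → Type u}
    (z : ∀ i, Sum.elim F K i) :
    glue (fun a => z (.inl a)) (fun c => z (.inr c)) = z := by
  funext i; rcases i with i | i <;> rfl

/-- transitivity of tilings. If `B₁ × ⋯ × B_m × B` is
`(T₁,…,T_m,A)`-tilable and `C₁ × ⋯ × C_n × C^d` is `(U₁,…,U_n,B,…,B)`-tilable,
then `B₁ × ⋯ × B_m × C₁ × ⋯ × C_n × C^d` is
`(T₁,…,T_m,U₁,…,U_n,A,…,A)`-tilable. -/
theorem tilableTransitive {G : Type u} [AddCommGroup G]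
    {m n d : ℕ} (Gm : Fin m → Type u) [∀ i, AddCommGroup (Gm i)]
    (Hn : Fin n → Type u) [∀ i, AddCommGroup (Hn i)]
    (A B C : Set G) (hAB : A ⊆ B) (hBC : B ⊆ C)
    (Tm : ∀ i, Set (Gm i)) (Bm : ∀ i, Set (Gm i)) (hTB : ∀ i, Tm i ⊆ Bm i)
    (Un : ∀ i, Set (Hn i)) (Cn : ∀ i, Set (Hn i)) (hUC : ∀ i, Un i ⊆ Cn i)
    (h1 : TilableD (G := Sum.elim Gm fun _ : Unit => G)
            (fun i => match i with
              | .inl a => Tm a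
              | .inr _ => A)
            {z | (∀ a : Fin m, z (.inl a) ∈ Bm a) ∧ z (.inr ()) ∈ B})
    (h2 : TilableD (G := Sum.elim Hn fun _ : Fin d => G)
            (fun i => match i with
              | .inl a => Un a
              | .inr _ => B)
            {z | (∀ a : Fin n, z (.inl a) ∈ Cn a) ∧ ∀ j : Fin d, z (.inr j) ∈ C}) :
    TilableD (G := Sum.elim Gm (Sum.elim Hn fun _ : Fin d => G))
      (fun i => match i with
        | .inl a => Tm a
        | .inr (.inl a) => Un a
        | .inr (.inr _) => A)
      {z | (∀ a : Fin m, z (.inl a) ∈ Bm a) ∧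
           (∀ a : Fin n, z (.inr (.inl a)) ∈ Cn a) ∧
           (∀ j : Fin d, z (.inr (.inr j)) ∈ C)} := by
  obtain ⟨P, hP1, hP2, hP3⟩ := h2
  have key : {z : ∀ i, Sum.elim Gm (Sum.elim Hn fun _ : Fin d => G) i |
        (∀ a : Fin m, z (.inl a) ∈ Bm a) ∧
        (∀ a : Fin n, z (.inr (.inl a)) ∈ Cn a) ∧
        (∀ j : Fin d, z (.inr (.inr j)) ∈ C)} =
      ⋃ S ∈ P, {z | (∀ a : Fin m, z (.inl a) ∈ Bm a) ∧ (fun c => z (.inr c)) ∈ S} := by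
    ext z
    have h3 := Set.ext_iff.1 hP3 (fun c => z (.inr c))
    simp only [Set.mem_iUnion, Set.mem_ofPred_eq, exists_prop]
    constructor
    · rintro ⟨hz, hz'⟩
      obtain ⟨S, hS, hzS⟩ := h3.2 hz'
      exact ⟨S, hS, hz, hzS⟩
    · rintro ⟨S, hS, hz, hzS⟩
      exact ⟨hz, h3.1 ⟨S, hS, hzS⟩⟩
  rw [key]
  apply tilableD_iUnion
  · intro S hS S' hS' hne
    refine Set.disjoint_left.2 ?_
    rintro z ⟨_, hz⟩ ⟨_, hz'⟩
    exact Set.disjoint_left.1 (hP2 hS hS' hne) hz hz'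
  intro S hS
  obtain ⟨j, y, rfl⟩ := hP1 S hS
  rcases j with a | j
  · have : {z : ∀ i, Sum.elim Gm (Sum.elim Hn fun _ : Fin d => G) i |
        (∀ a : Fin m, z (.inl a) ∈ Bm a) ∧ (fun c => z (.inr c)) ∈
          {z : ∀ i, Sum.elim Hn (fun _ : Fin d => G) i | ∃ t : Sum.elim Hn (fun _ : Fin d => G) (.inl a),
            t ∈ (Un a : Set (Hn a)) ∧ z = Function.update y (.inl a) (y (.inl a) + t)}} =
        ⋃ b ∈ {b : ∀ a, Gm a | ∀ a, b a ∈ Bm a},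
          {z | ∃ t : Sum.elim Hn (fun _ : Fin d => G) (.inl a), t ∈ (Un a : Set (Hn a)) ∧
            z = Function.update (glue b y) (.inr (.inl a))
            ((y (.inl a) + t : Sum.elim Hn (fun _ : Fin d => G) (.inl a)))} := by
      ext z
      simp only [Set.mem_iUnion, Set.mem_ofPred_eq, exists_prop]
      constructor
      · rintro ⟨hz, t, ht, e⟩
        refine ⟨fun a => z (.inl a), hz, t, ht, ?_⟩
        exact ((glue_eta z).symm.trans (congrArg (glue _) e)).trans
          (glue_update_inr _ _ _ _)
      · rintro ⟨b, hb, t, ht, e⟩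
        rw [← glue_update_inr] at e
        subst e
        exact ⟨hb, t, ht, rfl⟩
    refine Eq.mpr (congrArg _ this) ?_
    apply tilableD_iUnion
    · intro b _ b' _ hne
      refine Set.disjoint_left.2 ?_
      rintro z ⟨t, _, e⟩ ⟨t', _, e'⟩
      rw [← glue_update_inr] at e e'
      exact hne (glue_inj (e.symm.trans e')).1
    · intro b _
      exact tilableD_single _ _ ⟨.inr (.inl a), glue b y, rfl⟩
  · let sh : Sum.elim Hn (fun _ : Fin d => G) (.inr j) →
        Sum.elim Hn (fun _ : Fin d => G) (.inr j) := fun t => y (.inr j) + t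
    let f : (∀ i, Sum.elim Gm (fun _ : Unit => G) i) →
        ∀ i, Sum.elim Gm (Sum.elim Hn fun _ : Fin d => G) i := fun w =>
      glue (fun a => w (.inl a)) (Function.update y (.inr j) (sh (w (.inr ()))))
    have hf : Function.Injective f := by
      intro w w' h
      obtain ⟨ha, hb⟩ := glue_inj h
      have hb := congrFun hb (.inr j)
      rw [Function.update_self, Function.update_self] at hb
      have hb := add_left_cancel hb
      funext i
      rcases i with i | i
      · exact congrFun ha i
      · exact hb
    have h4 := tilableD_image _ (fun i => match i with
        | .inl a => Tm a
        | .inr (.inl a) => Un a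
        | .inr (.inr _) => A) f hf (image_copy _ _ f ?_) _ h1
    · refine Eq.mp (congrArg _ ?_) h4
      ext z
      constructor
      · rintro ⟨w, ⟨hw, hw'⟩, rfl⟩
        exact ⟨hw, w (.inr ()), hw', rfl⟩
      · rintro ⟨hz, t, ht, e⟩
        refine ⟨glue (fun a => z (.inl a)) (fun _ => t), ⟨hz, ht⟩, ?_⟩
        refine Eq.trans ?_ (glue_eta z)
        rw [e]
        rfl
    · rintro (a | ⟨⟩) w
      · refine ⟨.inl a, fun t => t, (Set.image_id _).symm, fun t => ?_⟩
        have e1 := glue_update_inl (fun a => w (.inl a)) (fun c => w (.inr c)) a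
          (w (.inl a) + t)
        rw [glue_eta w] at e1
        exact (congrArg f e1.symm).trans (glue_update_inl _ _ a _)
      · refine ⟨.inr (.inr j), fun t => t, (Set.image_id _).symm, fun t => ?_⟩
        have e1 := glue_update_inr (fun a => w (.inl a)) (fun c => w (.inr c)) ()
          (w (.inr ()) + t)
        rw [glue_eta w] at e1
        refine (congrArg f e1.symm).trans (Eq.trans ?_ (glue_update_inr _ _ (Sum.inr j) _))
        refine congrArg (glue _) ?_
        refine Eq.trans ?_ (Function.update_idem _ _ _).symm
        refine congrArg (Function.update y (.inr j)) ?_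
        have e2 : f w (.inr (.inr j)) = sh (w (.inr ())) :=
          Function.update_self _ _ _
        rw [e2]
        exact (add_assoc (G := G) _ _ _).symm
end

section
/- Let G, H and G₁, ..., G_n be abelian groups with tiles T ⊂ G and U_i ⊂ G_i, and let ρ : G → H be a surjective group homomorphism that is injective on T. If G₁ × ⋯ × G_n × H is (U₁, ..., U_n, ρ(T))-tilable, then G₁ × ⋯ × G_n × G is (U₁, ..., U_n, T)-tilable. -/
universe u

theorem liftGeneral {ι : Type*} [DecidableEq ι] {A B : ι → Type*}
    [∀ i, AddCommGroup (A i)] [∀ i, AddCommGroup (B i)]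
    (TA : ∀ i, Set (A i)) (TB : ∀ i, Set (B i)) (r : ∀ i, A i →+ B i)
    (hT : ∀ i, TB i = r i '' TA i) (hinj : ∀ i, Set.InjOn (r i) (TA i))
    (h : TilableD TB Set.univ) : TilableD TA Set.univ := by
  obtain ⟨P, hP, hd, hu⟩ := h
  have hne : Nonempty ι := by
    have h0 : (0 : ∀ i, B i) ∈ ⋃₀ P := by rw [hu]; trivial
    obtain ⟨S, hSP, _⟩ := h0
    exact ⟨(hP S hSP).choose⟩
  choose! j y hS using hP
  have key : ∀ (k : ι) (w : ∀ i, A i) (t : A k),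
      (fun i => r i (Function.update w k (w k + t) i)) =
        Function.update (fun i => r i (w i)) k (r k (w k) + r k t) := by
    intro k w t
    funext i
    by_cases hi : i = k
    · subst hi; simp
    · simp [hi]
  refine ⟨{C | ∃ S ∈ P, ∃ w : ∀ i, A i, (fun i => r i (w i)) = y S ∧
    C = {z | ∃ t ∈ TA (j S), z = Function.update w (j S) (w (j S) + t)}}, ?_, ?_, ?_⟩
  · rintro C ⟨S, _, w, _, rfl⟩
    exact ⟨j S, w, rfl⟩
  · rintro C ⟨S, hSP, w, hw, rfl⟩ C' ⟨S', hSP', w', hw', rfl⟩ hne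
    simp only [Function.onFun, id]
    rw [Set.disjoint_left]
    rintro z ⟨t, ht, hz⟩ ⟨t', ht', hz'⟩
    have m : (fun i => r i (z i)) ∈ S := by
      rw [hS S hSP, hz, key]
      exact ⟨r _ t, by rw [hT]; exact ⟨t, ht, rfl⟩, by rw [← hw]⟩
    have m' : (fun i => r i (z i)) ∈ S' := by
      rw [hS S' hSP', hz', key]
      exact ⟨r _ t', by rw [hT]; exact ⟨t', ht', rfl⟩, by rw [← hw']⟩
    have e : S = S' := by
      by_contra hn
      exact Set.disjoint_left.1 (hd hSP hSP' hn) m m'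
    subst e
    have hzj : w (j S) + t = w' (j S) + t' := by
      have := congrFun (hz.symm.trans hz') (j S)
      simpa using this
    have hrw : r (j S) (w (j S)) = r (j S) (w' (j S)) := congrFun (hw.trans hw'.symm) (j S)
    have htt : t = t' := by
      apply hinj _ ht ht'
      have := congrArg (r (j S)) hzj
      rw [map_add, map_add, hrw] at this
      exact add_left_cancel this
    apply hne
    have : w = w' := by
      funext i
      by_cases hi : i = j S
      · subst hi
        rw [htt] at hzj
        exact add_right_cancel hzj
      · have := congrFun (hz.symm.trans hz') i
        simpa [hi] using this
    rw [this]
  · apply Set.eq_univ_of_forall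
    intro z
    have hz : (fun i => r i (z i)) ∈ ⋃₀ P := by rw [hu]; trivial
    obtain ⟨S, hSP, hzS⟩ := hz
    rw [hS S hSP] at hzS
    obtain ⟨b, hb, hz⟩ := hzS
    rw [hT] at hb
    obtain ⟨t, ht, rfl⟩ := hb
    refine ⟨_, ⟨S, hSP, Function.update z (j S) (z (j S) - t), ?_, rfl⟩, t, ht, ?_⟩
    · funext i
      have := congrFun hz i
      by_cases hi : i = j S
      · subst hi
        simp at this
        simp [this]
      · simpa [hi] using this
    · simp

/-- lifting a tiling along a surjective homomorphism
`ρ : G → H` injective on `T`: if `G₁ × ⋯ × G_n × H` is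
`(U₁,…,U_n,ρ(T))`-tilable then `G₁ × ⋯ × G_n × G` is `(U₁,…,U_n,T)`-tilable. -/
theorem liftTiling {G H : Type u} [AddCommGroup G] [AddCommGroup H]
    {n : ℕ} (Gn : Fin n → Type u) [∀ i, AddCommGroup (Gn i)]
    (T : Set G) (U : ∀ i, Set (Gn i))
    (ρ : G →+ H) (hsurj : Function.Surjective ρ) (hinj : Set.InjOn ρ T)
    (h : TilableD (G := Sum.elim Gn fun _ : Unit => H)
          (fun i => match i with
            | .inl a => U a
            | .inr _ => ρ '' T)
          Set.univ) :
    TilableD (G := Sum.elim Gn fun _ : Unit => G)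
      (fun i => match i with
        | .inl a => U a
        | .inr _ => T)
      Set.univ := by
  refine liftGeneral (A := Sum.elim Gn fun _ : Unit => G)
    (B := Sum.elim Gn fun _ : Unit => H) _ _ (fun i => match i with
    | .inl a => AddMonoidHom.id (Gn a)
    | .inr _ => ρ) ?_ ?_ h
  · rintro (a | b)
    · exact (Set.image_id (U a)).symm
    · rfl
  · rintro (a | b)
    · exact fun x _ y _ hxy => hxy
    · exact hinj
end

section
/- Let T be a finite non-empty subset of ℤ^n. Then there exists d ≥ 1 such that ℤ^d can be partitioned into isometric copies of T (in fact, copies obtained by translating T and placing it along coordinate subspaces of ℤ^d via permutations of coordinates). -/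
/-- Embed `ℤ^n` into `ℤ^d` (pad with zeros in the last `d - n` coordinates). -/
def embed {n d : ℕ} (t : Fin n → ℤ) : Fin d → ℤ :=
  fun j => if h : (j : ℕ) < n then t ⟨j, h⟩ else 0

/-- A copy of the tile `T ⊆ ℤ^n` in `ℤ^d`: the image of `T × {0}^{d-n}` under
an isometry of `ℤ^d` (a signed permutation of coordinates followed by a
translation). -/
def IsIsoCopy {n d : ℕ} (T : Set (Fin n → ℤ)) (S : Set (Fin d → ℤ)) : Prop :=
  ∃ (σ : Equiv.Perm (Fin d)) (ε : Fin d → ℤ) (y : Fin d → ℤ),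
    (∀ j, ε j = 1 ∨ ε j = -1) ∧
    S = (fun t : Fin n → ℤ => fun j => ε j * embed t (σ j) + y j) '' T

namespace TilingAux

open Function

/-- `U` can be partitioned into tiles from `F` along directions in `J`. -/
def Tl {S : Type} (F : Set (Finset S)) (J : Set ℕ) (U : Set (ℕ → S)) : Prop :=
  ∃ c : (ℕ → S) → ℕ × Finset S, ∀ x ∈ U, (c x).1 ∈ J ∧ (c x).2 ∈ F ∧ x (c x).1 ∈ (c x).2 ∧
    ∀ a ∈ (c x).2, update x (c x).1 a ∈ U ∧ c (update x (c x).1 a) = c x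

/-- `U` can be partitioned into tiles along finitely many directions. -/
def Good {S : Type} (F : Set (Finset S)) (U : Set (ℕ → S)) : Prop :=
  ∃ J : Finset ℕ, Tl F (J : Set ℕ) U

/-- `U` only depends on the coordinates in `A`. -/
def Dep {S : Type} (A : Finset ℕ) (U : Set (ℕ → S)) : Prop :=
  ∀ x x' : ℕ → S, (∀ i ∈ A, x i = x' i) → x ∈ U → x' ∈ U

section basic

variable {S : Type} {F : Set (Finset S)}

theorem Tl.mono {J J' : Set ℕ} {U : Set (ℕ → S)} (h : Tl F J U) (hJ : J ⊆ J') : Tl F J' U := by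
  obtain ⟨c, hc⟩ := h
  exact ⟨c, fun x hx => ⟨hJ (hc x hx).1, (hc x hx).2⟩⟩

theorem Tl.union {J : Set ℕ} {U V : Set (ℕ → S)} (hU : Tl F J U) (hV : Tl F J V)
    (hd : Disjoint U V) : Tl F J (U ∪ V) := by
  classical
  obtain ⟨c, hc⟩ := hU
  obtain ⟨d, hd'⟩ := hV
  refine ⟨fun x => if x ∈ U then c x else d x, ?_⟩
  intro x hx
  by_cases hxU : x ∈ U
  · simp only [hxU, if_true]
    obtain ⟨h1, h2, h3, h4⟩ := hc x hxU
    refine ⟨h1, h2, h3, fun a ha => ?_⟩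
    obtain ⟨h5, h6⟩ := h4 a ha
    refine ⟨Or.inl h5, ?_⟩
    simp only [h5, if_true, h6]
  · have hxV : x ∈ V := hx.resolve_left hxU
    simp only [hxU, if_false]
    obtain ⟨h1, h2, h3, h4⟩ := hd' x hxV
    refine ⟨h1, h2, h3, fun a ha => ?_⟩
    obtain ⟨h5, h6⟩ := h4 a ha
    refine ⟨Or.inr h5, ?_⟩
    have : update x (d x).1 a ∉ U := fun h => Set.disjoint_left.1 hd h h5
    simp only [this, if_false, h6]

theorem Tl.inter {J : Set ℕ} {A : Finset ℕ} {U C : Set (ℕ → S)} (hU : Tl F J U) (hC : Dep A C)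
    (hd : ∀ i ∈ A, i ∉ J) : Tl F J (U ∩ C) := by
  obtain ⟨c, hc⟩ := hU
  refine ⟨c, ?_⟩
  rintro x ⟨hxU, hxC⟩
  obtain ⟨h1, h2, h3, h4⟩ := hc x hxU
  refine ⟨h1, h2, h3, fun a ha => ⟨⟨(h4 a ha).1, ?_⟩, (h4 a ha).2⟩⟩
  refine hC x _ (fun i hi => ?_) hxC
  rw [update_of_ne]
  rintro rfl
  exact hd _ hi h1

theorem Tl.pull {J : Set ℕ} {U : Set (ℕ → S)} (hU : Tl F J U) (f : ℕ → ℕ) (hf : Injective f) :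
    Tl F (f '' J) {x | x ∘ f ∈ U} := by
  obtain ⟨c, hc⟩ := hU
  refine ⟨fun x => (f (c (x ∘ f)).1, (c (x ∘ f)).2), ?_⟩
  intro x hx
  obtain ⟨h1, h2, h3, h4⟩ := hc _ hx
  refine ⟨⟨_, h1, rfl⟩, h2, h3, fun a ha => ?_⟩
  obtain ⟨h5, h6⟩ := h4 a ha
  have key : update x (f (c (x ∘ f)).1) a ∘ f = update (x ∘ f) (c (x ∘ f)).1 a :=
    update_comp_eq_of_injective x hf _ a
  refine ⟨?_, ?_⟩
  · simp only [Set.mem_setOf_eq, key]; exact h5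
  · simp only [key, h6]

theorem Good.union {U V : Set (ℕ → S)} (hU : Good F U) (hV : Good F V)
    (hd : Disjoint U V) : Good F (U ∪ V) := by
  classical
  obtain ⟨J, hJ⟩ := hU
  obtain ⟨J', hJ'⟩ := hV
  refine ⟨J ∪ J', Tl.union (hJ.mono ?_) (hJ'.mono ?_) hd⟩ <;> simp

theorem good_empty : Good F (∅ : Set (ℕ → S)) :=
  ⟨∅, fun _ => (0, ∅), fun x hx => absurd hx (Set.notMem_empty x)⟩

theorem good_biUnion {κ : Type*} (s : Finset κ) (U : κ → Set (ℕ → S))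
    (hU : ∀ k ∈ s, Good F (U k)) (hd : ∀ k ∈ s, ∀ l ∈ s, k ≠ l → Disjoint (U k) (U l)) :
    Good F (⋃ k ∈ s, U k) := by
  classical
  induction s using Finset.induction_on with
  | empty => simpa using good_empty
  | insert a s ha ih =>
    rw [Finset.set_biUnion_insert]
    refine Good.union (hU a (by simp)) (ih (fun k hk => hU k (by simp [hk]))
      (fun k hk l hl => hd k (by simp [hk]) l (by simp [hl]))) ?_
    rw [Set.disjoint_iUnion₂_right]
    intro k hk
    exact hd a (by simp) k (by simp [hk]) (by rintro rfl; exact ha hk)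

theorem good_iUnion {κ : Type*} [Fintype κ] (U : κ → Set (ℕ → S))
    (hU : ∀ k, Good F (U k)) (hd : ∀ k l, k ≠ l → Disjoint (U k) (U l)) :
    Good F (⋃ k, U k) := by
  have := good_biUnion (F := F) Finset.univ U (fun k _ => hU k) (fun k _ l _ => hd k l)
  simpa using this

theorem Dep.mono {A A' : Finset ℕ} {U : Set (ℕ → S)} (h : Dep A U) (hA : A ⊆ A') : Dep A' U :=
  fun x x' hx => h x x' (fun i hi => hx i (hA hi))

theorem Dep.iff {A : Finset ℕ} {U : Set (ℕ → S)} (h : Dep A U) {x x' : ℕ → S}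
    (hx : ∀ i ∈ A, x i = x' i) : x ∈ U ↔ x' ∈ U :=
  ⟨h x x' hx, h x' x (fun i hi => (hx i hi).symm)⟩

theorem Good.inter {I A : Finset ℕ} {U C : Set (ℕ → S)} (hU : Good F U) (hI : Dep I U)
    (hC : Dep A C) (hd : Disjoint I A) : Good F (U ∩ C) := by
  classical
  obtain ⟨J, hJ⟩ := hU
  set M := (I ∪ A).sup id + 1 with hM
  have hMI : ∀ i ∈ I ∪ A, i < M := fun i hi =>
    Nat.lt_succ_of_le (Finset.le_sup (f := id) hi)
  let f : ℕ → ℕ := fun i => if i ∈ I then i else i + M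
  have hf : Injective f := by
    intro i j hij
    simp only [f] at hij
    split_ifs at hij with h1 h2 h2
    · exact hij
    · have := hMI i (by simp [h1]); omega
    · have := hMI j (by simp [h2]); omega
    · omega
  have h1 := (hJ.pull f hf).inter (A := A) (C := C) hC (by
    rintro i hi ⟨j, -, rfl⟩
    have h3 := hMI _ (Finset.mem_union_right I hi)
    simp only [f] at h3 hi
    split_ifs at h3 hi with h4
    · exact Finset.disjoint_left.1 hd h4 hi
    · omega)
  have h2 : {x : ℕ → S | x ∘ f ∈ U} = U := by
    ext x
    refine hI.iff (fun i hi => ?_)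
    simp [f, hi]
  rw [h2] at h1
  refine ⟨J.image f, ?_⟩
  simpa using h1

/-- Gluing over the values of one coordinate. -/
theorem good_fiber [Fintype S] {A : Finset ℕ} {U : Set (ℕ → S)} (hA : Dep A U) (i : ℕ)
    (h : ∀ s, Good F {x | update x i s ∈ U}) : Good F U := by
  classical
  have h1 : U = ⋃ s, ({x | update x i s ∈ U} ∩ {x | x i = s}) := by
    ext x
    simp
  rw [h1]
  refine good_iUnion _ (fun s => ?_) ?_
  · refine (h s).inter (I := A.erase i) (A := {i}) ?_ ?_ (by simp)
    · intro x x' hx hU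
      refine hA _ _ (fun k hk => ?_) hU
      by_cases hki : k = i
      · subst hki; simp
      · simp only [update_of_ne hki]
        exact hx k (Finset.mem_erase.2 ⟨hki, hk⟩)
    · intro x x' hx hU
      simp only [Set.mem_setOf_eq] at hU ⊢
      rw [← hx i (by simp)]; exact hU
  · intro k l hkl
    rw [Set.disjoint_left]
    rintro x ⟨-, hx⟩ ⟨-, hx'⟩
    exact hkl (hx.symm.trans hx')

theorem good_line {D : Finset S} (hD : D ∈ F) {A : Finset ℕ} {V : Set (ℕ → S)} (hV : Dep A V)
    {j : ℕ} (hj : j ∉ A) : Good F (V ∩ {x | x j ∈ D}) := by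
  refine ⟨{j}, fun _ => (j, D), ?_⟩
  rintro x ⟨hx, hxD⟩
  refine ⟨by simp, hD, hxD, fun a ha => ⟨⟨?_, by simpa using ha⟩, rfl⟩⟩
  refine hV x _ (fun i hi => ?_) hx
  rw [update_of_ne]
  rintro rfl
  exact hj hi

theorem tool0 [Fintype S] {β : Type} [Fintype β] (B : β → Finset S) (hB : ∀ b, B b ∈ F)
    {A : Finset ℕ} {U : Set (ℕ → S)} (hU : Dep A U) (V : β → Set (ℕ → S))
    (hV : ∀ b, Dep A (V b)) (hVU : ∀ b, V b ⊆ U) (hd : ∀ b b', b ≠ b' → Disjoint (V b) (V b'))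
    (h : ∀ s, Good F (U \ ⋃ b, ⋃ (_ : s ∈ B b), V b)) : Good F U := by
  classical
  obtain ⟨j, hj⟩ := Infinite.exists_notMem_finset A
  have hW : ∀ s, Dep A (U \ ⋃ b, ⋃ (_ : s ∈ B b), V b) := by
    rintro s x x' hx ⟨h1, h2⟩
    refine ⟨hU x x' hx h1, fun h3 => h2 ?_⟩
    simp only [Set.mem_iUnion] at h3 ⊢
    obtain ⟨b, hb, h4⟩ := h3
    exact ⟨b, hb, (hV b).iff hx |>.2 h4⟩
  have key : U = (⋃ b, (V b ∩ {x | x j ∈ B b})) ∪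
      ⋃ s, ((U \ ⋃ b, ⋃ (_ : s ∈ B b), V b) ∩ {x | x j = s}) := by
    ext x
    simp only [Set.mem_union, Set.mem_iUnion, Set.mem_inter_iff, Set.mem_setOf_eq, Set.mem_diff]
    constructor
    · intro hx
      by_cases hb : ∃ b, x ∈ V b ∧ x j ∈ B b
      · exact Or.inl hb
      · refine Or.inr ⟨x j, ⟨hx, ?_⟩, rfl⟩
        rintro ⟨b, h1, h2⟩
        exact hb ⟨b, h2, h1⟩
    · rintro (⟨b, h1, h2⟩ | ⟨s, ⟨h1, h2⟩, h3⟩)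
      · exact hVU b h1
      · exact h1
  rw [key]
  refine Good.union ?_ ?_ ?_
  · refine good_iUnion _ (fun b => good_line (hB b) (hV b) hj) ?_
    intro b b' hbb
    exact (hd b b' hbb).mono Set.inter_subset_left Set.inter_subset_left
  · refine good_iUnion _ (fun s => ?_) ?_
    · refine (h s).inter (I := A) (A := {j}) (hW s) ?_ (by simpa using hj)
      intro x x' hx hU
      simp only [Set.mem_setOf_eq] at hU ⊢
      rw [← hx j (by simp)]; exact hU
    · intro k l hkl
      rw [Set.disjoint_left]
      rintro x ⟨-, hx⟩ ⟨-, hx'⟩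
      exact hkl (hx.symm.trans hx')
  · rw [Set.disjoint_left]
    intro x h1 h2
    simp only [Set.mem_iUnion, Set.mem_inter_iff, Set.mem_setOf_eq, Set.mem_diff] at h1 h2
    obtain ⟨b, h1, h1'⟩ := h1
    obtain ⟨s, ⟨h2, h3⟩, rfl⟩ := h2
    exact h3 ⟨b, h1', h1⟩

end basic

section tool

variable {S : Type} {F : Set (Finset S)}

/-- A core set `K` together with a disjoint family of parts. -/
structure Sys {κ : Type} (A : Finset ℕ) (K : Set (ℕ → S)) (V : κ → Set (ℕ → S)) : Prop where
  dK : Dep A K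
  dV : ∀ p, Dep A (V p)
  dis : ∀ p q, p ≠ q → Disjoint (V p) (V q)
  disK : ∀ p, Disjoint K (V p)

/-- The core with the parts from `E`. -/
def GG {κ : Type} (K : Set (ℕ → S)) (V : κ → Set (ℕ → S)) (E : Finset κ) : Set (ℕ → S) :=
  K ∪ ⋃ p ∈ E, V p

theorem mem_GG {κ : Type} {K : Set (ℕ → S)} {V : κ → Set (ℕ → S)} {E : Finset κ} {x : ℕ → S} :
    x ∈ GG K V E ↔ x ∈ K ∨ ∃ p ∈ E, x ∈ V p := by
  simp [GG]

theorem Sys.dG {κ : Type} {A : Finset ℕ} {K : Set (ℕ → S)} {V : κ → Set (ℕ → S)}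
    (h : Sys A K V) (E : Finset κ) : Dep A (GG K V E) := by
  intro x x' hx
  simp only [mem_GG]
  rintro (h1 | ⟨p, hp, h1⟩)
  · exact Or.inl (h.dK x x' hx h1)
  · exact Or.inr ⟨p, hp, h.dV p x x' hx h1⟩

theorem Sys.step [Fintype S] {κ : Type} {A : Finset ℕ} {K : Set (ℕ → S)} {V : κ → Set (ℕ → S)}
    (h : Sys A K V) {β : Type} [Fintype β] (B : β → Finset S) (hB : ∀ b, B b ∈ F)
    (cnt : S → ℕ) (hcnt : ∀ s, Nat.card {b // s ∈ B b} = cnt s)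
    (E : Finset κ) (hE : Fintype.card β ≤ E.card)
    (hg : ∀ s (E' : Finset κ), E'.card + cnt s = E.card → Good F (GG K V E')) :
    Good F (GG K V E) := by
  classical
  have : Nonempty (β ↪ E) := by
    apply Function.Embedding.nonempty_of_card_le
    simpa using hE
  obtain ⟨ρ⟩ := this
  have hρ : ∀ b b', ((ρ b : κ) = ρ b') → b = b' := fun b b' hb => ρ.injective (Subtype.ext hb)
  refine tool0 B hB (h.dG E) (fun b => V (ρ b)) (fun b => h.dV _) ?_ ?_ ?_
  · intro b x hx
    exact mem_GG.2 (Or.inr ⟨_, (ρ b).2, hx⟩)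
  · intro b b' hb
    exact h.dis _ _ (fun h1 => hb (hρ _ _ h1))
  · intro s
    let R : Finset κ := (Finset.univ.filter (fun b => s ∈ B b)).image (fun b => (ρ b : κ))
    have hR : R ⊆ E := by
      intro p hp
      simp only [R, Finset.mem_image] at hp
      obtain ⟨b, -, rfl⟩ := hp
      exact (ρ b).2
    have hRc : R.card = cnt s := by
      rw [Finset.card_image_of_injective _ (fun b b' hb => hρ b b' hb), ← hcnt s,
        Nat.card_eq_fintype_card, Fintype.card_subtype]
    have := hg s (E \ R) (by rw [← hRc]; exact Finset.card_sdiff_add_card_eq_card hR)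
    convert this using 1
    ext x
    simp only [Set.mem_sdiff, mem_GG, Set.mem_iUnion, Finset.mem_sdiff, R, Finset.mem_image,
      Finset.mem_filter, Finset.mem_univ, true_and]
    constructor
    · rintro ⟨h1 | ⟨p, hp, h1⟩, h2⟩
      · exact Or.inl h1
      · refine Or.inr ⟨p, ⟨hp, ?_⟩, h1⟩
        rintro ⟨b, hb, rfl⟩
        exact h2 ⟨b, hb, h1⟩
    · rintro (h1 | ⟨p, ⟨hp, h2⟩, h1⟩)
      · refine ⟨Or.inl h1, ?_⟩
        rintro ⟨b, hb, h3⟩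
        exact Set.disjoint_left.1 (h.disK _) h1 h3
      · refine ⟨Or.inr ⟨p, hp, h1⟩, ?_⟩
        rintro ⟨b, hb, h3⟩
        by_cases hpb : p = ρ b
        · exact h2 ⟨b, hb, hpb.symm⟩
        · exact Set.disjoint_left.1 (h.dis _ _ hpb) h1 h3

/-- Reaching all large cardinalities from a single one. -/
def Tool (F : Set (Finset S)) (v0 v1 : ℕ) : Prop :=
  v0 ≤ v1 ∧ ∀ (κ : Type) (A : Finset ℕ) (K : Set (ℕ → S)) (V : κ → Set (ℕ → S)), Sys A K V →
    (∀ E : Finset κ, E.card = v0 → Good F (GG K V E)) →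
    ∀ E : Finset κ, v1 ≤ E.card → Good F (GG K V E)

theorem exists_tool [Fintype S] {α β : Type} [Fintype α] [Fintype β] (t : ℕ) (ht : 1 ≤ t)
    (B : β → Finset S) (hB : ∀ b, B b ∈ F) (hBc : ∀ s, Nat.card {b // s ∈ B b} = t)
    (C : α → Finset S) (hC : ∀ a, C a ∈ F) (u : S → ℕ)
    (hCc : ∀ s, Nat.card {a // s ∈ C a} = 1 + t * u s) :
    ∃ v0 v1, Tool F v0 v1 := by
  classical
  set q := Fintype.card β
  set m := Fintype.card α
  have hu : ∀ s, 1 + t * u s ≤ m := by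
    intro s
    rw [← hCc s, Nat.card_eq_fintype_card]
    exact Fintype.card_subtype_le _
  have hu' : ∀ s, u s ≤ m := by
    intro s
    have h1 := hu s
    have h2 : 1 * u s ≤ t * u s := Nat.mul_le_mul_right _ ht
    omega
  refine ⟨q, q + t * (1 + t * m), Nat.le_add_right _ _, ?_⟩
  intro κ A K V hs h0
  have l1 : ∀ v, q ≤ v → (∀ E : Finset κ, E.card = v → Good F (GG K V E)) →
      ∀ j, ∀ E : Finset κ, E.card = v + t * j → Good F (GG K V E) := by
    intro v hv h j
    induction j with
    | zero => simpa using h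
    | succ j ih =>
      intro E hE
      refine hs.step B hB (fun _ => t) hBc E (by rw [hE]; exact le_trans hv (Nat.le_add_right _ _)) ?_
      intro s E' hE'
      apply ih
      rw [hE, Nat.mul_succ] at hE'
      omega
  have l2 : ∀ i, ∀ j, ∀ E : Finset κ, E.card = (q + i * (1 + t * m)) + t * j →
      Good F (GG K V E) := by
    intro i
    induction i with
    | zero => simpa using l1 q le_rfl h0
    | succ i ih =>
      intro j E hE
      have hm : m ≤ t * m := Nat.le_mul_of_pos_left m ht
      rw [Nat.succ_mul] at hE
      refine hs.step C hC _ hCc E (by omega) ?_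
      intro s E' hE'
      apply ih (m + j - u s)
      have := hu' s
      obtain ⟨k, hk⟩ := Nat.exists_eq_add_of_le this
      have e1 : m + j - u s = k + j := by omega
      rw [e1]
      have e2 : t * m = t * u s + t * k := by rw [hk, Nat.mul_add]
      rw [Nat.mul_add t k j]
      omega
  intro E hE
  set r := E.card - q with hr
  have h1 : r % t < t := Nat.mod_lt _ ht
  have h2 : t * (r / t) + r % t = r := Nat.div_add_mod r t
  have h3 : m * (r % t) ≤ r / t := by
    have h4 : t * (m * (r % t)) + r % t ≤ r := by
      have : (r % t) * (1 + t * m) ≤ t * (1 + t * m) := Nat.mul_le_mul_right _ h1.le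
      have e : (r % t) * (1 + t * m) = t * (m * (r % t)) + r % t := by ring
      omega
    have h5 : t * (m * (r % t)) ≤ t * (r / t) := by omega
    exact Nat.le_of_mul_le_mul_left h5 ht
  obtain ⟨k, hk⟩ := Nat.exists_eq_add_of_le h3
  apply l2 (r % t) k
  have e : (r % t) * (1 + t * m) + t * k = t * (r / t) + r % t := by rw [hk]; ring
  omega

end tool

section hole

variable {S : Type} {F : Set (Finset S)}

/-- The coordinates (reindexed by `ν`) where `x` differs from `y`. -/
def pat {ν : Type} (g : ν → ℕ) (y x : ℕ → S) : Set ν := {j | x (g j) ≠ y (g j)}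

/-- Points whose difference pattern lies in `𝒯`. -/
def RR {ν : Type} (g : ν → ℕ) (y : ℕ → S) (D : ν → Finset S) (𝒯 : Set (Set ν)) : Set (ℕ → S) :=
  {x | (∀ j, x (g j) ∈ D j) ∧ pat g y x ∈ 𝒯}

theorem RR_dep {ν : Type} [Fintype ν] {g : ν → ℕ} {y : ℕ → S} {D : ν → Finset S}
    {𝒯 : Set (Set ν)} {I : Finset ℕ} (hI : ∀ j, g j ∈ I) : Dep I (RR g y D 𝒯) := by
  rintro x x' hx ⟨h1, h2⟩
  refine ⟨fun j => by rw [← hx _ (hI j)]; exact h1 j, ?_⟩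
  convert h2 using 1
  ext j
  simp [pat, hx _ (hI j)]

theorem RR_disj {ν : Type} {g : ν → ℕ} {y : ℕ → S} {D : ν → Finset S}
    {𝒯 𝒯' : Set (Set ν)} (h : ∀ τ, τ ∈ 𝒯 → τ ∈ 𝒯' → False) :
    Disjoint (RR g y D 𝒯) (RR g y D 𝒯') := by
  rw [Set.disjoint_left]
  rintro x ⟨-, h1⟩ ⟨-, h2⟩
  exact h _ h1 h2

theorem RR_good {ν : Type} [Fintype ν] {g : ν → ℕ} (hg : Injective g) {y : ℕ → S}
    {D : ν → Finset S} (hD : ∀ j, D j ∈ F) {𝒯 : Set (Set ν)} (m : Set ν → ν)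
    (h1 : ∀ τ ∈ 𝒯, insert (m τ) τ ∈ 𝒯 ∧ m (insert (m τ) τ) = m τ)
    (h2 : ∀ τ ∈ 𝒯, τ \ {m τ} ∈ 𝒯 ∧ m (τ \ {m τ}) = m τ) :
    Good F (RR g y D 𝒯) := by
  classical
  refine ⟨Finset.univ.image g, fun x => (g (m (pat g y x)), D (m (pat g y x))), ?_⟩
  rintro x ⟨hx1, hx2⟩
  refine ⟨by simp, hD _, hx1 _, fun a ha => ?_⟩
  simp only at ha ⊢
  set j := m (pat g y x) with hj
  have key : pat g y (update x (g j) a) ∈ 𝒯 ∧ m (pat g y (update x (g j) a)) = j := by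
    by_cases hay : a = y (g j)
    · have : pat g y (update x (g j) a) = pat g y x \ {j} := by
        ext k
        by_cases hk : k = j
        · subst hk; simp [pat, hay]
        · simp [pat, hk, update_of_ne (fun h => hk (hg h))]
      rw [this]; exact h2 _ hx2
    · have : pat g y (update x (g j) a) = insert j (pat g y x) := by
        ext k
        by_cases hk : k = j
        · subst hk; simp [pat, hay]
        · simp [pat, hk, update_of_ne (fun h => hk (hg h))]
      rw [this]; exact h1 _ hx2
  refine ⟨⟨fun k => ?_, key.1⟩, by rw [key.2]⟩
  by_cases hk : k = j
  · subst hk; simpa using ha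
  · rw [update_of_ne (fun h => hk (hg h))]; exact hx1 k

/-- Index type for the coordinates of the gadget. -/
abbrev Nu (L : ℕ) : Type := Fin L ⊕ (Fin L × Bool)

/-- patterns for the `W` parts -/
def PW {L : ℕ} (i : Fin L) : Set (Set (Nu L)) :=
  {τ | Sum.inl i ∈ τ ∧ (∀ k, Sum.inl k ∈ τ → k = i) ∧ ∀ b e, Sum.inr (b, e) ∉ τ}

/-- patterns for the `X` parts -/
def PX {L : ℕ} : Option (Fin L) → Set (Set (Nu L))
  | none => {τ | (∀ k, Sum.inl k ∉ τ) ∧ ∀ b e, Sum.inr (b, e) ∉ τ}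
  | some a => {τ | Sum.inr (a, false) ∈ τ ∧ (∀ b e, Sum.inr (b, e) ∈ τ → b = a) ∧
      (∀ k l, Sum.inl k ∈ τ → Sum.inl l ∈ τ → k = l) ∧
      (Sum.inr (a, true) ∈ τ ∨ ∃ k, Sum.inl k ∈ τ)}

theorem PW_disj {L : ℕ} (i j : Fin L) (hij : i ≠ j) (τ : Set (Nu L)) (h : τ ∈ PW i)
    (h' : τ ∈ PW j) : False := hij (h'.2.1 _ h.1)

theorem PXW_disj {L : ℕ} (a : Option (Fin L)) (j : Fin L) (τ : Set (Nu L)) (h : τ ∈ PX a)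
    (h' : τ ∈ PW j) : False := by
  cases a with
  | none => exact h.1 _ h'.1
  | some a => exact h'.2.2 _ _ h.1

theorem PX_disj {L : ℕ} (a b : Option (Fin L)) (hab : a ≠ b) (τ : Set (Nu L)) (h : τ ∈ PX a)
    (h' : τ ∈ PX b) : False := by
  cases a with
  | none =>
    cases b with
    | none => exact hab rfl
    | some b => exact h.2 _ _ h'.1
  | some a =>
    cases b with
    | none => exact h'.2 _ _ h.1
    | some b => exact hab (by rw [h'.2.1 _ _ h.1])

theorem XW_good {L : ℕ} {g : Nu L → ℕ} (hg : Injective g) {y : ℕ → S}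
    {D : Nu L → Finset S} (hD : ∀ j, D j ∈ F) (a : Option (Fin L)) (i : Fin L) :
    Good F (RR g y D (PX a) ∪ RR g y D (PW i)) := by
  classical
  have e : RR g y D (PX a) ∪ RR g y D (PW i) = RR g y D (PX a ∪ PW i) := by
    ext x; simp only [RR, Set.mem_union, Set.mem_ofPred_eq]; tauto
  rw [e]
  cases a with
  | none =>
    refine RR_good hg hD (fun _ => Sum.inl i) ?_ ?_
    · rintro τ (⟨h1, h2⟩ | ⟨h1, h2, h3⟩)
      · refine ⟨Or.inr ⟨by simp, ?_, ?_⟩, rfl⟩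
        · intro k hk; simpa [h1] using hk
        · intro b e; simp [h2]
      · refine ⟨Or.inr ⟨by simp, ?_, ?_⟩, rfl⟩
        · intro k hk
          simp only [Set.mem_insert_iff, Sum.inl.injEq] at hk
          exact hk.elim id (h2 k)
        · intro b e; simp [h3]
    · rintro τ (⟨h1, h2⟩ | ⟨h1, h2, h3⟩)
      · exact ⟨Or.inl ⟨by simp [h1], by simp [h2]⟩, rfl⟩
      · refine ⟨Or.inl ⟨?_, by simp [h3]⟩, rfl⟩
        rintro k ⟨hk, hk'⟩
        exact hk' (by simp [h2 k hk])
  | some a =>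
    let m : Set (Nu L) → Nu L := fun τ =>
      if Sum.inr (a, true) ∉ τ ∧ Sum.inl i ∈ τ then Sum.inr (a, false)
      else if Sum.inr (a, true) ∈ τ ∧ ∀ k, Sum.inl k ∈ τ → k = i then Sum.inl i
      else Sum.inr (a, true)
    have hm : ∀ τ, m τ = if Sum.inr (a, true) ∉ τ ∧ Sum.inl i ∈ τ then Sum.inr (a, false)
      else if Sum.inr (a, true) ∈ τ ∧ ∀ k, Sum.inl k ∈ τ → k = i then Sum.inl i
      else Sum.inr (a, true) := fun τ => rfl
    clear_value m
    have hX : ∀ τ, τ ∈ PX (some a) ↔ (Sum.inr (a, false) ∈ τ ∧ (∀ b e, Sum.inr (b, e) ∈ τ → b = a) ∧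
      (∀ k l, Sum.inl k ∈ τ → Sum.inl l ∈ τ → k = l) ∧
      (Sum.inr (a, true) ∈ τ ∨ ∃ k, Sum.inl k ∈ τ)) := fun _ => Iff.rfl
    have hW : ∀ τ, τ ∈ PW i ↔ (Sum.inl i ∈ τ ∧ (∀ k, Sum.inl k ∈ τ → k = i) ∧
      ∀ b e, Sum.inr (b, e) ∉ τ) := fun _ => Iff.rfl
    refine RR_good hg hD m ?_ ?_
    · intro τ hτ
      rw [Set.mem_union, hX, hW] at hτ
      rw [Set.mem_union, hX, hW]
      by_cases c1 : Sum.inr (a, true) ∉ τ ∧ Sum.inl i ∈ τ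
      · have : m τ = Sum.inr (a, false) := by rw [hm, if_pos c1]
        rw [this, hm, if_pos (by simpa using c1)]
        grind
      · by_cases c2 : Sum.inr (a, true) ∈ τ ∧ ∀ k, Sum.inl k ∈ τ → k = i
        · have : m τ = Sum.inl i := by rw [hm, if_neg c1, if_pos c2]
          rw [this, hm, if_neg (by simp [c2.1]), if_pos (by simpa using c2)]
          grind
        · have : m τ = Sum.inr (a, true) := by rw [hm, if_neg c1, if_neg c2]
          rw [this, hm, if_neg (by simp), if_neg (by grind)]
          grind
    · intro τ hτ
      rw [Set.mem_union, hX, hW] at hτ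
      rw [Set.mem_union, hX, hW]
      by_cases c1 : Sum.inr (a, true) ∉ τ ∧ Sum.inl i ∈ τ
      · have : m τ = Sum.inr (a, false) := by rw [hm, if_pos c1]
        rw [this, hm, if_pos (by simpa using c1)]
        refine ⟨Or.inr ⟨by simp [c1.2], by grind, ?_⟩, rfl⟩
        intro b e hb
        cases e <;> grind
      · by_cases c2 : Sum.inr (a, true) ∈ τ ∧ ∀ k, Sum.inl k ∈ τ → k = i
        · have : m τ = Sum.inl i := by rw [hm, if_neg c1, if_pos c2]
          rw [this, hm, if_neg (by simp), if_pos (by grind)]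
          grind
        · have : m τ = Sum.inr (a, true) := by rw [hm, if_neg c1, if_neg c2]
          rw [this, hm, if_neg (by grind), if_neg (by simp)]
          grind

theorem hole {v0 v1 : ℕ} (hT : Tool F v0 v1) (hcov : ∀ s, ∃ D ∈ F, s ∈ D) :
    ∃ n, ∀ I : Finset ℕ, I.card = n → ∀ y : ℕ → S, ∃ G : Set (ℕ → S), Dep I G ∧ y ∈ G ∧
      Good F G ∧ Good F (G \ {x | ∀ i ∈ I, x i = y i}) := by
  classical
  refine ⟨Fintype.card (Nu v1), ?_⟩
  intro I hI y
  have e : Nu v1 ≃ I := Fintype.equivOfCardEq (by simp only [hI, Fintype.card_coe])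
  let g : Nu v1 → ℕ := fun j => e j
  have hg : Injective g := fun a b h => e.injective (Subtype.ext h)
  have hgI : ∀ j, g j ∈ I := fun j => (e j).2
  have hIg : ∀ i ∈ I, ∃ j, g j = i := fun i hi => ⟨e.symm ⟨i, hi⟩, by simp [g]⟩
  clear_value g
  choose D hD hyD using fun j => hcov (y (g j))
  let W : Fin v1 → Set (ℕ → S) := fun i => RR g y D (PW i)
  let X : Option (Fin v1) → Set (ℕ → S) := fun a => RR g y D (PX a)
  have dW : ∀ i, Dep I (W i) := fun i => RR_dep hgI
  have dX : ∀ i, Dep I (X i) := fun i => RR_dep hgI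
  have jW : ∀ i j, i ≠ j → Disjoint (W i) (W j) := fun i j h => RR_disj (PW_disj i j h)
  have jX : ∀ i j, i ≠ j → Disjoint (X i) (X j) := fun i j h => RR_disj (PX_disj i j h)
  have jXW : ∀ i j, Disjoint (X i) (W j) := fun i j => RR_disj (PXW_disj i j)
  have dE : Dep I (∅ : Set (ℕ → S)) := fun x x' _ h => h
  have sW : Sys I ∅ W := ⟨dE, dW, jW, fun p => Set.empty_disjoint _⟩
  have sX : Sys I ∅ X := ⟨dE, dX, jX, fun p => Set.empty_disjoint _⟩
  have sX' : ∀ B, Sys I (GG ∅ W B) X := fun B => ⟨sW.dG B, dX, jX, fun p => by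
    rw [Set.disjoint_left]
    intro x hx hx'
    rw [mem_GG] at hx
    obtain ⟨j, -, hj⟩ := hx.resolve_left (Set.notMem_empty x)
    exact Set.disjoint_left.1 (jXW p j) hx' hj⟩
  have sW' : ∀ B, Sys I (GG ∅ X B) W := fun B => ⟨sX.dG B, dW, jW, fun p => by
    rw [Set.disjoint_left]
    intro x hx hx'
    rw [mem_GG] at hx
    obtain ⟨j, -, hj⟩ := hx.resolve_left (Set.notMem_empty x)
    exact Set.disjoint_left.1 (jXW j p) hj hx'⟩
  have g0 : ∀ A B, A.card = v0 → B.card = v0 → Good F (GG (GG ∅ W B) X A) := by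
    intro A B hA hB
    have f : A ≃ B := Fintype.equivOfCardEq (by simp [hA, hB])
    have h1 : GG (GG ∅ W B) X A = ⋃ a : A, (X a ∪ W (f a)) := by
      ext x
      simp only [mem_GG, Set.mem_iUnion, Set.mem_union, Set.mem_empty_iff_false, false_or]
      constructor
      · rintro (⟨b, hb, h⟩ | ⟨a, ha, h⟩)
        · exact ⟨f.symm ⟨b, hb⟩, Or.inr (by simpa using h)⟩
        · exact ⟨⟨a, ha⟩, Or.inl h⟩
      · rintro ⟨a, h | h⟩
        · exact Or.inr ⟨a, a.2, h⟩
        · exact Or.inl ⟨f a, (f a).2, h⟩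
    rw [h1]
    refine good_iUnion _ (fun a => XW_good hg hD _ _) ?_
    intro a b hab
    have h2 : (a : Option (Fin v1)) ≠ b := fun h => hab (Subtype.ext h)
    have h3 : (f a : Fin v1) ≠ f b := fun h => hab (f.injective (Subtype.ext h))
    rw [Set.disjoint_union_left, Set.disjoint_union_right, Set.disjoint_union_right]
    exact ⟨⟨jX _ _ h2, jXW _ _⟩, (jXW _ _).symm, jW _ _ h3⟩
  have g1 : ∀ A B, v1 ≤ A.card → B.card = v0 → Good F (GG (GG ∅ W B) X A) := by
    intro A B hA hB
    exact hT.2 _ I _ _ (sX' B) (fun E hE => g0 E B hE hB) A hA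
  have sw : ∀ A B, GG (GG ∅ W B) X A = GG (GG ∅ X A) W B := by
    intro A B
    ext x
    simp only [mem_GG, Set.mem_empty_iff_false, false_or]
    exact or_comm
  have g2 : ∀ A, v1 ≤ A.card → Good F (GG (GG ∅ X A) W Finset.univ) := by
    intro A hA
    refine hT.2 _ I _ _ (sW' A) (fun E hE => ?_) _ (by simp)
    rw [← sw]; exact g1 A E hA hE
  have hnone : ∀ x, x ∈ X none ↔ ∀ i ∈ I, x i = y i := by
    intro x
    constructor
    · rintro ⟨h1, h2⟩ i hi
      obtain ⟨j, rfl⟩ := hIg i hi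
      by_contra hne
      rcases j with j | ⟨b, c⟩
      · exact h2.1 j hne
      · exact h2.2 b c hne
    · intro h
      refine ⟨fun j => by rw [h _ (hgI j)]; exact hyD j, ?_, ?_⟩
      · intro k hk; exact hk (h _ (hgI _))
      · intro b c hk; exact hk (h _ (hgI _))
  refine ⟨GG (GG ∅ X Finset.univ) W Finset.univ, (sW' _).dG _, ?_, g2 _ (by simp), ?_⟩
  · rw [mem_GG, mem_GG]
    exact Or.inl (Or.inr ⟨none, by simp, (hnone y).2 (fun _ _ => rfl)⟩)
  · convert g2 (Finset.univ.erase none) (by simp) using 1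
    ext x
    simp only [Set.mem_sdiff, Set.mem_ofPred_eq, ← hnone, mem_GG, Set.mem_empty_iff_false,
      false_or, Finset.mem_univ, true_and, Finset.mem_erase, and_true]
    constructor
    · rintro ⟨⟨a, ha⟩ | h, h2⟩
      · refine Or.inl ⟨a, ?_, ha⟩
        rintro rfl
        exact h2 ha
      · exact Or.inr h
    · rintro (⟨a, ha, h⟩ | ⟨b, h⟩)
      · exact ⟨Or.inl ⟨a, h⟩, fun h' => Set.disjoint_left.1 (jX _ _ ha) h h'⟩
      · exact ⟨Or.inr ⟨b, h⟩, fun h' => Set.disjoint_left.1 (jXW _ _) h' h⟩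

end hole

section tolerance

variable {S : Type} {F : Set (Finset S)}

/-- The cylinder over `H` can be tiled after removing boundedly many patterns. -/
def Tol (F : Set (Finset S)) (H : Set S) : Prop :=
  ∃ N : ℕ, ∀ I : Finset ℕ, 0 ∉ I → ∀ (Y : Finset (ℕ → S)) (O : Set (ℕ → S)),
    Dep (insert 0 I) O → (∀ x ∈ O, ∃ y ∈ Y, ∀ i ∈ I, x i = y i) → N + Y.card ≤ I.card →
    Good F ({x | x 0 ∈ H} \ O)

/-- The same with a single pattern. -/
def Tol1 (F : Set (Finset S)) (H : Set S) : Prop :=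
  ∃ N : ℕ, ∀ I : Finset ℕ, 0 ∉ I → N ≤ I.card → ∀ (y : ℕ → S) (O : Set S),
    Good F {x | x 0 ∈ H ∧ ¬ (x 0 ∈ O ∧ ∀ i ∈ I, x i = y i)}

theorem Tol1.tol [Fintype S] [Nonempty S] {H : Set S} (h : Tol1 F H) : Tol F H := by
  classical
  obtain ⟨N, hN⟩ := h
  refine ⟨N, ?_⟩
  intro I hI Y
  induction hk : Y.card using Nat.strong_induction_on generalizing I Y with
  | _ k ih =>
  intro O hO hOY hc
  by_cases hag : ∀ y1 ∈ Y, ∀ y2 ∈ Y, ∀ i ∈ I, y1 i = y2 i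
  · have : ∃ y0 : ℕ → S, ∀ x ∈ O, ∀ i ∈ I, x i = y0 i := by
      rcases Y.eq_empty_or_nonempty with hY | ⟨y0, hy0⟩
      · refine ⟨fun _ => Classical.arbitrary S, fun x hx => ?_⟩
        obtain ⟨y, hy, -⟩ := hOY x hx
        simp [hY] at hy
      · refine ⟨y0, fun x hx i hi => ?_⟩
        obtain ⟨y, hy, h1⟩ := hOY x hx
        rw [h1 i hi]
        exact hag _ hy _ hy0 i hi
    obtain ⟨y0, hy0⟩ := this
    have h1 := hN I hI (by omega) y0 {s | update y0 0 s ∈ O}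
    convert h1 using 1
    ext x
    simp only [Set.mem_sdiff, Set.mem_ofPred_eq]
    refine and_congr_right (fun _ => not_congr ?_)
    constructor
    · intro hx
      refine ⟨?_, hy0 x hx⟩
      refine hO x _ ?_ hx
      intro i hi
      by_cases hi0 : i = 0
      · subst hi0; simp
      · rw [update_of_ne hi0]
        exact hy0 x hx i (Finset.mem_of_mem_insert_of_ne hi hi0)
    · rintro ⟨h2, h3⟩
      refine hO _ x ?_ h2
      intro i hi
      by_cases hi0 : i = 0
      · subst hi0; simp
      · rw [update_of_ne hi0]
        exact (h3 i (Finset.mem_of_mem_insert_of_ne hi hi0)).symm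
  · push Not at hag
    obtain ⟨y1, hy1, y2, hy2, i, hi, hne⟩ := hag
    have hi0 : i ≠ 0 := by rintro rfl; exact hI hi
    have hD : Dep (insert 0 I) ({x : ℕ → S | x 0 ∈ H} \ O) := by
      rintro x x' hx ⟨h1, h2⟩
      refine ⟨?_, fun h3 => h2 ((hO.iff hx).2 h3)⟩
      simp only [Set.mem_ofPred_eq] at h1 ⊢
      rw [← hx 0 (by simp)]; exact h1
    refine good_fiber hD i (fun s => ?_)
    have hlt : (Y.filter (fun y => y i = s)).card < k := by
      rw [← hk]
      apply Finset.card_lt_card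
      rw [Finset.filter_ssubset]
      by_cases h1 : y1 i = s
      · exact ⟨y2, hy2, fun h2 => hne (h1.trans h2.symm)⟩
      · exact ⟨y1, hy1, h1⟩
    have := ih _ hlt (I.erase i) (fun h => hI (Finset.mem_of_mem_erase h))
      (Y.filter (fun y => y i = s)) rfl {x | update x i s ∈ O} ?_ ?_ ?_
    · convert this using 1
      ext x
      simp only [Set.mem_ofPred_eq, Set.mem_sdiff, update_of_ne hi0.symm]
    · intro x x' hx h1
      refine hO _ _ ?_ h1
      intro j hj
      by_cases hji : j = i
      · subst hji; simp
      · rw [update_of_ne hji, update_of_ne hji]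
        apply hx
        simp only [Finset.mem_insert, Finset.mem_erase] at hj ⊢
        tauto
    · intro x hx
      obtain ⟨y, hy, h1⟩ := hOY _ hx
      refine ⟨y, ?_, ?_⟩
      · have := h1 i hi
        simp only [update_self] at this
        simp [hy, this]
      · intro j hj
        rw [Finset.mem_erase] at hj
        have := h1 j hj.2
        rwa [update_of_ne hj.1] at this
    · rw [Finset.card_erase_of_mem hi]
      omega

theorem Tol.step [Fintype S] [Nonempty S] {v0 v1 : ℕ} (hT : Tool F v0 v1)
    (hcov : ∀ s, ∃ D ∈ F, s ∈ D) {H : Set S} (h : Tol F H) {D : Finset S} (hD : D ∈ F) :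
    Tol1 F (H ∪ D) := by
  classical
  obtain ⟨n, hn⟩ := hole hT hcov
  obtain ⟨N, hN⟩ := h
  refine ⟨N + (Fintype.card S) ^ n + v1 + n, ?_⟩
  intro I hI hIc y O
  obtain ⟨J, hJI, hJ⟩ := Finset.exists_subset_card_eq (s := I) (n := n) (by omega)
  obtain ⟨G, dG, hyG, gG, gG'⟩ := hn J hJ y
  let G' : Set (ℕ → S) := {x | x ∈ G ∧ ∀ i ∈ I \ J, x i = y i}
  have dG' : Dep I G' := by
    rintro x x' hx ⟨h1, h2⟩
    refine ⟨dG x x' (fun i hi => hx i (hJI hi)) h1, fun i hi => ?_⟩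
    rw [← h2 i hi, hx i (Finset.sdiff_subset hi)]
  have hG'J : ∀ x ∈ G', ∀ i ∈ I, i ∉ J → x i = y i := fun x hx i hi hj =>
    hx.2 i (Finset.mem_sdiff.2 ⟨hi, hj⟩)
  have hyG' : ∀ x : ℕ → S, (∀ i ∈ I, x i = y i) → x ∈ G' := by
    intro x hx
    exact (dG'.iff hx).2 ⟨hyG, fun _ _ => rfl⟩
  let ex : (I → S) → (ℕ → S) := fun p i => if h : i ∈ I then p ⟨i, h⟩ else y i
  have hex : ∀ (p : I → S) (x : ℕ → S), (∀ i : I, x i = p i) ↔ ∀ i ∈ I, x i = ex p i := by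
    intro p x
    constructor
    · intro h i hi
      simp only [ex, hi, dif_pos]; exact h ⟨i, hi⟩
    · rintro h ⟨i, hi⟩
      have := h i hi
      simpa only [ex, hi, dif_pos] using this
  let κ : Type := {p : I → S // ex p ∉ G'}
  let V : κ → Set (ℕ → S) := fun p => {x | x 0 ∈ D ∧ x 0 ∉ H ∧ ∀ i : I, x i = p.1 i}
  let K : Set (ℕ → S) := {x | x 0 ∈ H ∧ ¬ (x 0 ∈ D ∧ x ∈ G') ∧ ¬ (x 0 ∈ O ∧ ∀ i ∈ I, x i = y i)}
  have hκ : ∀ (p : κ) (x : ℕ → S), (∀ i : I, x i = p.1 i) → x ∉ G' := by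
    intro p x hx h1
    exact p.2 ((dG'.iff ((hex p.1 x).1 hx)).1 h1)
  have sys : Sys (insert 0 I) K V := by
    refine ⟨?_, ?_, ?_, ?_⟩
    · intro x x' hx
      have e1 : x 0 = x' 0 := hx 0 (by simp)
      have e2 : ∀ i ∈ I, x i = x' i := fun i hi => hx i (by simp [hi])
      have e3 : x ∈ G' ↔ x' ∈ G' := dG'.iff e2
      have e4 : (∀ i ∈ I, x i = y i) ↔ (∀ i ∈ I, x' i = y i) :=
        forall₂_congr (fun i hi => by rw [e2 i hi])
      simp only [K, Set.mem_ofPred_eq, e1, e3, e4]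
      exact id
    · intro p x x' hx
      have e1 : x 0 = x' 0 := hx 0 (by simp)
      have e4 : (∀ i : I, x i = p.1 i) ↔ (∀ i : I, x' i = p.1 i) :=
        forall_congr' (fun i => by rw [hx i (by simp)])
      simp only [V, Set.mem_ofPred_eq, e1, e4]
      exact id
    · intro p q hpq
      rw [Set.disjoint_left]
      rintro x ⟨-, -, h1⟩ ⟨-, -, h2⟩
      exact hpq (Subtype.ext (funext fun i => by rw [← h1 i, ← h2 i]))
    · intro p
      rw [Set.disjoint_left]
      rintro x ⟨h1, -⟩ ⟨-, h2, -⟩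
      exact h2 h1
  -- small `E`
  have small : ∀ E : Finset κ, E.card ≤ v1 → Good F (GG K V E) := by
    intro E hE
    let OE : Set (ℕ → S) := {x | (x 0 ∈ D ∧ (x ∈ G' ∨ ∃ p ∈ E, ∀ i : I, x i = p.1 i)) ∨
      (x 0 ∈ O ∧ ∀ i ∈ I, x i = y i)}
    let L : Set (ℕ → S) := {x | ∃ p ∈ E, ∀ i : I, x i = p.1 i}
    have dL : Dep I L := by
      rintro x x' hx ⟨p, hp, h1⟩
      exact ⟨p, hp, fun i => by rw [← hx i i.2]; exact h1 i⟩
    have key : GG K V E = (L ∩ {x | x 0 ∈ D}) ∪ ({x | x 0 ∈ H} \ OE) := by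
      ext x
      rw [mem_GG]
      constructor
      · rintro (⟨h1, h2, h3⟩ | ⟨p, hp, h1, h2, h3⟩)
        · by_cases h4 : x 0 ∈ D ∧ x ∈ L
          · exact Or.inl ⟨h4.2, h4.1⟩
          · refine Or.inr ⟨h1, ?_⟩
            rintro (⟨h5, h6 | h6⟩ | h5)
            · exact h2 ⟨h5, h6⟩
            · exact h4 ⟨h5, h6⟩
            · exact h3 h5
        · exact Or.inl ⟨⟨p, hp, h3⟩, h1⟩
      · rintro (⟨⟨p, hp, h1⟩, h2⟩ | ⟨h1, h2⟩)
        · by_cases h3 : x 0 ∈ H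
          · refine Or.inl ⟨h3, fun h4 => hκ p x h1 h4.2, fun h4 => hκ p x h1 (hyG' x h4.2)⟩
          · exact Or.inr ⟨p, hp, h2, h3, h1⟩
        · refine Or.inl ⟨h1, fun h3 => h2 (Or.inl ⟨h3.1, Or.inl h3.2⟩), fun h3 => h2 (Or.inr h3)⟩
    rw [key]
    refine Good.union (good_line hD dL hI) ?_ ?_
    · let Y : Finset (ℕ → S) := (Finset.univ : Finset (J → S)).image
        (fun q i => if h : i ∈ J then q ⟨i, h⟩ else y i) ∪ E.image (fun p => ex p.1)
      refine hN I hI Y OE ?_ ?_ ?_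
      · intro x x' hx
        have e1 : x 0 = x' 0 := hx 0 (by simp)
        have e2 : ∀ i ∈ I, x i = x' i := fun i hi => hx i (by simp [hi])
        have e3 : x ∈ G' ↔ x' ∈ G' := dG'.iff e2
        have e4 : (∀ i ∈ I, x i = y i) ↔ (∀ i ∈ I, x' i = y i) :=
          forall₂_congr (fun i hi => by rw [e2 i hi])
        have e5 : (∃ p ∈ E, ∀ i : I, x i = p.1 i) ↔ (∃ p ∈ E, ∀ i : I, x' i = p.1 i) := dL.iff e2
        simp only [OE, Set.mem_ofPred_eq, e1, e3, e4, e5]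
        exact id
      · intro x hx
        have c1 : x ∈ G' → ∃ y ∈ Y, ∀ i ∈ I, x i = y i := by
          intro hxG
          refine ⟨fun i => if h : i ∈ J then x i else y i, ?_, ?_⟩
          · refine Finset.mem_union_left _ (Finset.mem_image.2 ⟨fun i => x i, by simp, rfl⟩)
          · intro i hi
            by_cases hj : i ∈ J
            · simp [hj]
            · simp only [hj, dif_neg, not_false_eq_true]
              exact hG'J x hxG i hi hj
        rcases hx with ⟨-, h1 | ⟨p, hp, h1⟩⟩ | ⟨-, h1⟩
        · exact c1 h1
        · exact ⟨ex p.1, Finset.mem_union_right _ (Finset.mem_image_of_mem _ hp),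
            (hex _ _).1 h1⟩
        · exact c1 (hyG' x h1)
      · have a1 : Y.card ≤ Fintype.card S ^ n + v1 := by
          refine (Finset.card_union_le _ _).trans (Nat.add_le_add ?_ ?_)
          · refine Finset.card_image_le.trans ?_
            simp [hJ]
          · exact Finset.card_image_le.trans hE
        omega
    · rw [Set.disjoint_left]
      rintro x ⟨h1, h2⟩ ⟨h3, h4⟩
      exact h4 (Or.inl ⟨h2, Or.inr h1⟩)
  have big : Good F (GG K V Finset.univ) := by
    by_cases hc : (Finset.univ : Finset κ).card ≤ v1
    · exact small _ hc
    · refine hT.2 κ _ K V sys (fun E hE => small E (by rw [hE]; exact hT.1)) _ (by omega)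
  let C : Set S → Set (ℕ → S) := fun Q => {x | x 0 ∈ Q ∧ ∀ i ∈ I \ J, x i = y i}
  have dC : ∀ Q, Dep (insert 0 (I \ J)) (C Q) := by
    rintro Q x x' hx ⟨h1, h2⟩
    refine ⟨by rw [← hx 0 (by simp)]; exact h1, fun i hi => ?_⟩
    rw [← h2 i hi, hx i (Finset.mem_insert_of_mem hi)]
  have dJ : Disjoint J (insert 0 (I \ J)) := by
    rw [Finset.disjoint_left]
    intro i hi h1
    rw [Finset.mem_insert, Finset.mem_sdiff] at h1
    rcases h1 with rfl | h1
    · exact hI (hJI hi)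
    · exact h1.2 hi
  have z1 : Good F (G ∩ C {s | s ∈ D ∧ s ∉ O}) := gG.inter dG (dC _) dJ
  have z2 : Good F ((G \ {x | ∀ i ∈ J, x i = y i}) ∩ C {s | s ∈ D ∧ s ∈ O}) := by
    refine gG'.inter ?_ (dC _) dJ
    rintro x x' hx ⟨h1, h2⟩
    refine ⟨dG x x' hx h1, fun h3 => h2 fun i hi => ?_⟩
    rw [hx i hi]; exact h3 i hi
  have z3 := z1.union z2 (by
    rw [Set.disjoint_left]
    rintro x ⟨-, h1, -⟩ ⟨-, h2, -⟩
    exact h1.2 h2.2)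
  have hZ : ∀ x, x ∈ (G ∩ C {s | s ∈ D ∧ s ∉ O}) ∪
      ((G \ {x | ∀ i ∈ J, x i = y i}) ∩ C {s | s ∈ D ∧ s ∈ O}) ↔
      (x 0 ∈ D ∧ x ∈ G' ∧ ¬ (x 0 ∈ O ∧ ∀ i ∈ I, x i = y i)) := by
    intro x
    constructor
    · rintro (⟨h1, h2, h3⟩ | ⟨⟨h1, h4⟩, h2, h3⟩)
      · exact ⟨h2.1, ⟨h1, h3⟩, fun h => h2.2 h.1⟩
      · exact ⟨h2.1, ⟨h1, h3⟩, fun h => h4 fun i hi => h.2 i (hJI hi)⟩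
    · rintro ⟨h1, ⟨h2, h3⟩, h4⟩
      by_cases h5 : x 0 ∈ O
      · refine Or.inr ⟨⟨h2, fun h6 => h4 ⟨h5, fun i hi => ?_⟩⟩, ⟨h1, h5⟩, h3⟩
        by_cases hj : i ∈ J
        · exact h6 i hj
        · exact h3 i (Finset.mem_sdiff.2 ⟨hi, hj⟩)
      · exact Or.inl ⟨h2, ⟨h1, h5⟩, h3⟩
  have hU : ∀ x, x ∈ GG K V Finset.univ ↔ ((x 0 ∈ H ∨ x 0 ∈ D) ∧ ¬ (x 0 ∈ D ∧ x ∈ G') ∧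
      ¬ (x 0 ∈ O ∧ ∀ i ∈ I, x i = y i)) := by
    intro x
    rw [mem_GG]
    constructor
    · rintro (⟨h1, h2, h3⟩ | ⟨p, -, h1, h2, h3⟩)
      · exact ⟨Or.inl h1, h2, h3⟩
      · exact ⟨Or.inr h1, fun h4 => hκ p x h3 h4.2, fun h4 => hκ p x h3 (hyG' x h4.2)⟩
    · rintro ⟨h1, h2, h3⟩
      by_cases h4 : x 0 ∈ H
      · exact Or.inl ⟨h4, h2, h3⟩
      · have h5 : x 0 ∈ D := h1.resolve_left h4
        refine Or.inr ⟨⟨fun i => x i, fun h6 => h2 ⟨h5, ?_⟩⟩, Finset.mem_univ _, h5, h4,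
          fun i => rfl⟩
        exact (dG'.iff ((hex (fun i => x i) x).1 (fun i => rfl))).2 h6
  have fin := z3.union big (by
    rw [Set.disjoint_left]
    intro x h1 h2
    rw [hZ] at h1
    rw [hU] at h2
    exact h2.2.1 ⟨h1.1, h1.2.1⟩)
  convert fin using 1
  ext x
  rw [Set.mem_union, hZ, hU]
  simp only [Set.mem_ofPred_eq, Set.mem_union, Finset.mem_coe]
  tauto

theorem good_univ [Fintype S] [Nonempty S] {v0 v1 : ℕ} (hT : Tool F v0 v1)
    (hcov : ∀ s, ∃ D ∈ F, s ∈ D) : Good F (Set.univ : Set (ℕ → S)) := by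
  classical
  choose D hD hsD using hcov
  have key : ∀ Q : Finset S, Tol F (⋃ s ∈ Q, (D s : Set S)) := by
    intro Q
    induction Q using Finset.induction_on with
    | empty =>
      refine ⟨0, fun I _ Y O _ _ _ => ?_⟩
      convert good_empty (F := F) using 1
      ext x
      simp
    | insert a Q ha ih =>
      rw [Finset.set_biUnion_insert, Set.union_comm]
      exact (Tol.step hT (fun s => ⟨D s, hD s, hsD s⟩) ih (hD a)).tol
  obtain ⟨N, hN⟩ := key Finset.univ
  have := hN ((Finset.range N).image (· + 1)) (by simp) ∅ ∅ (fun x x' _ h => h) (by simp)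
    (by rw [Finset.card_image_of_injective _ (add_left_injective 1)]; simp)
  convert this using 1
  ext x
  simp only [Set.mem_univ, Set.sdiff_empty, Set.mem_ofPred_eq, true_iff, Set.mem_iUnion]
  exact ⟨x 0, Finset.mem_univ _, hsD _⟩

end tolerance

section covers

theorem exists_functional {n : ℕ} (T : Finset (Fin n → ℤ)) :
    ∃ φ : (Fin n → ℤ) →+ ℤ, Set.InjOn φ T := by
  classical
  let P : (Fin n → ℤ) → Polynomial ℤ := fun v => ∑ i, Polynomial.C (v i) * Polynomial.X ^ (i : ℕ)
  have hP : ∀ v, v ≠ 0 → P v ≠ 0 := by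
    intro v hv h
    apply hv
    funext i
    have := congrArg (fun p => Polynomial.coeff p (i : ℕ)) h
    simp only [P, Polynomial.finsetSum_coeff, Polynomial.coeff_C_mul, Polynomial.coeff_X_pow,
      Polynomial.coeff_zero, Fin.val_inj] at this
    simpa using this
  let Q : Polynomial ℤ := ∏ p ∈ (T ×ˢ T).filter (fun p => p.1 ≠ p.2), P (p.1 - p.2)
  have hQ : Q ≠ 0 := by
    rw [Finset.prod_ne_zero_iff]
    intro p hp
    exact hP _ (sub_ne_zero.2 (Finset.mem_filter.1 hp).2)
  have : ∃ M : ℤ, Q.eval M ≠ 0 := by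
    by_contra h
    push Not at h
    exact hQ (Polynomial.funext (fun r => by rw [h r, Polynomial.eval_zero]))
  obtain ⟨M, hM⟩ := this
  refine ⟨{ toFun := fun v => (P v).eval M, map_zero' := ?_, map_add' := ?_ }, ?_⟩
  · simp [P]
  · intro u v
    simp [P, add_mul, Finset.sum_add_distrib]
  · intro u hu v hv huv
    by_contra hne
    apply hM
    rw [Polynomial.eval_prod]
    apply Finset.prod_eq_zero (i := (u, v))
    · simp only [Finset.mem_filter, Finset.mem_product]
      exact ⟨⟨hu, hv⟩, hne⟩
    · simp only [AddMonoidHom.coe_mk, ZeroHom.coe_mk] at huv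
      have : P (u - v) = P u - P v := by
        simp [P, sub_mul, Finset.sum_sub_distrib]
      rw [this, Polynomial.eval_sub, huv, sub_self]

theorem exists_period {R : Type} [CommRing R] [Finite R] (g : Polynomial R) (hg : g.Monic)
    (h0 : IsUnit (g.coeff 0)) : ∃ N, 0 < N ∧ g ∣ Polynomial.X ^ N - 1 := by
  have := hg.finite_adjoinRoot
  have : Finite (AdjoinRoot g) := Module.finite_of_finite R
  have hu : IsUnit (AdjoinRoot.root g) := by
    have h1 : AdjoinRoot.mk g (Polynomial.X * g.divX + Polynomial.C (g.coeff 0)) = 0 := by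
      rw [mul_comm, Polynomial.divX_mul_X_add, AdjoinRoot.mk_self]
    rw [map_add, map_mul, AdjoinRoot.mk_X, AdjoinRoot.mk_C] at h1
    have h2 : AdjoinRoot.root g * (- AdjoinRoot.mk g g.divX) = AdjoinRoot.of g (g.coeff 0) := by
      linear_combination -h1
    have h3 : IsUnit (AdjoinRoot.root g * (- AdjoinRoot.mk g g.divX)) := by
      rw [h2]; exact h0.map _
    exact isUnit_of_mul_isUnit_left h3
  obtain ⟨u, hu⟩ := hu
  obtain ⟨N, hN, h⟩ := (isOfFinOrder_of_finite u).exists_pow_eq_one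
  refine ⟨N, hN, ?_⟩
  rw [← AdjoinRoot.mk_eq_zero, map_sub, map_pow, AdjoinRoot.mk_X, ← hu, map_one, ← Units.val_pow_eq_pow_val,
    h, Units.val_one, sub_self]

theorem exists_cover (T : Finset ℕ) (h0 : 0 ∈ T) (t M : ℕ) [NeZero t] :
    ∃ N, M < N ∧ ∃ w : ZMod N → ZMod t, ∀ s, ∑ τ ∈ T, w (s - (τ : ZMod N)) = 1 := by
  classical
  let f : Polynomial (ZMod t) := ∑ τ ∈ T, Polynomial.X ^ τ
  have hf : f.Monic := by
    have hm := T.max'_mem ⟨0, h0⟩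
    set m := T.max' ⟨0, h0⟩ with hmdef
    have e : f = Polynomial.X ^ m + ∑ τ ∈ T.erase m, Polynomial.X ^ τ :=
      (Finset.add_sum_erase _ _ hm).symm
    rw [e]
    apply Polynomial.monic_X_pow_add
    refine (Polynomial.degree_sum_le _ _).trans_lt ?_
    rw [Finset.sup_lt_iff (by exact WithBot.bot_lt_coe m)]
    intro τ hτ
    rw [Finset.mem_erase] at hτ
    refine (Polynomial.degree_X_pow_le τ).trans_lt ?_
    exact_mod_cast lt_of_le_of_ne (T.le_max' τ hτ.2) hτ.1
  have hX : (Polynomial.X - 1 : Polynomial (ZMod t)).Monic := by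
    simpa using Polynomial.monic_X_sub_C (1 : ZMod t)
  have hf0 : f.coeff 0 = 1 := by
    simp only [f, Polynomial.finsetSum_coeff, Polynomial.coeff_X_pow]
    simp [h0]
  obtain ⟨N0, hN0, hdvd⟩ := exists_period (f * (Polynomial.X - 1)) (hf.mul hX) (by
    rw [Polynomial.mul_coeff_zero, hf0]; simp)
  have hd2 : f * (Polynomial.X - 1) ∣ Polynomial.X ^ (N0 * (M + 1)) - 1 := by
    refine hdvd.trans ?_
    have := sub_dvd_pow_sub_pow (Polynomial.X ^ N0 : Polynomial (ZMod t)) 1 (M + 1)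
    rwa [one_pow, ← pow_mul] at this
  set N := N0 * (M + 1) with hN
  have hMN : M < N := by
    have : 1 * (M + 1) ≤ N0 * (M + 1) := Nat.mul_le_mul_right _ hN0
    omega
  have : NeZero N := ⟨by omega⟩
  obtain ⟨h, hh⟩ := hd2
  have hgeom : f * h = ∑ i ∈ Finset.range N, Polynomial.X ^ i := by
    have h1 := mul_geom_sum (Polynomial.X : Polynomial (ZMod t)) N
    rw [hh] at h1
    apply hX.isRegular.left
    show (Polynomial.X - 1) * (f * h) = (Polynomial.X - 1) * _
    rw [h1]; ring
  let ev : Polynomial (ZMod t) →+* AddMonoidAlgebra (ZMod t) (ZMod N) :=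
    Polynomial.eval₂RingHom AddMonoidAlgebra.singleZeroRingHom (AddMonoidAlgebra.single (1 : ZMod N) (1 : ZMod t))
  have hev : ∀ k : ℕ, ev (Polynomial.X ^ k) = AddMonoidAlgebra.single (k : ZMod N) (1 : ZMod t) := by
    intro k
    simp [ev, AddMonoidAlgebra.single_pow]
  refine ⟨N, hMN, fun s => (ev h).coeff s, fun s => ?_⟩
  have h2 := congrArg (fun p => (ev p).coeff s) hgeom
  simp only [map_mul, map_sum, f, hev, Finset.sum_mul, AddMonoidAlgebra.coeff_sum,
    Finsupp.coe_finset_sum, Finset.sum_apply, AddMonoidAlgebra.coeff_single_mul_apply, one_mul,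
    AddMonoidAlgebra.coeff_single] at h2
  have h3 : ∑ i ∈ Finset.range N, (Finsupp.single (i : ZMod N) (1 : ZMod t)) s = 1 := by
    rw [Finset.sum_eq_single s.val]
    · simp
    · intro i hi hne
      rw [Finsupp.single_apply, if_neg]
      rintro rfl
      apply hne
      rw [ZMod.val_natCast, Nat.mod_eq_of_lt (Finset.mem_range.1 hi)]
    · intro h4
      exact absurd (Finset.mem_range.2 (ZMod.val_lt s)) h4
  rw [h3] at h2
  rw [← h2]
  refine Finset.sum_congr rfl (fun τ _ => ?_)
  rw [sub_eq_neg_add]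

/-- translates of `T` modulo `N` -/
def Tr (T : Finset ℤ) (N : ℕ) (a : ZMod N) : Finset (ZMod N) :=
  T.image (fun τ : ℤ => a + (τ : ZMod N))

theorem good_zmod (T : Finset ℤ) (hT : T.Nonempty) :
    ∃ N, 0 < N ∧ Set.InjOn (fun τ : ℤ => (τ : ZMod N)) T ∧
      Good (Set.range (Tr T N)) (Set.univ : Set (ℕ → ZMod N)) := by
  classical
  set mn := T.min' hT with hmn
  have hmT : mn ∈ T := T.min'_mem hT
  have hle : ∀ τ ∈ T, mn ≤ τ := fun τ hτ => T.min'_le τ hτ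
  clear_value mn
  let T' : Finset ℕ := T.image (fun τ => (τ - mn).toNat)
  have hT'0 : 0 ∈ T' := Finset.mem_image.2 ⟨mn, hmT, by simp⟩
  set t := T.card with ht
  have htpos : 0 < t := Finset.card_pos.2 hT
  have : NeZero t := ⟨htpos.ne'⟩
  have hinj' : Set.InjOn (fun τ : ℤ => (τ - mn).toNat) T := by
    intro a ha b hb hab
    have h1 := hle a ha
    have h2 := hle b hb
    simp only at hab
    omega
  obtain ⟨N, hN, w, hw⟩ := exists_cover T' hT'0 t (T'.sup id)
  have hNpos : 0 < N := by omega
  have : NeZero N := ⟨hNpos.ne'⟩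
  have hinj : Set.InjOn (fun τ : ℤ => (τ : ZMod N)) T := by
    intro a ha b hb hab
    simp only at hab
    apply hinj' ha hb
    have e : ∀ c ∈ T, (((c - mn).toNat : ℕ) : ZMod N) = (c : ZMod N) - mn := by
      intro c hc
      have h1 : (((c - mn).toNat : ℕ) : ℤ) = c - mn := Int.toNat_of_nonneg (by have := hle c hc; omega)
      have := congrArg (fun z : ℤ => (z : ZMod N)) h1
      simp only [Int.cast_natCast, Int.cast_sub] at this
      exact this
    have lt : ∀ c ∈ T, (c - mn).toNat < N := by
      intro c hc
      refine lt_of_le_of_lt ?_ hN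
      exact Finset.le_sup (f := id) (Finset.mem_image_of_mem _ hc)
    have h1 : (((a - mn).toNat : ℕ) : ZMod N) = ((b - mn).toNat : ℕ) := by
      rw [e a ha, e b hb, hab]
    have h2 := congrArg ZMod.val h1
    rwa [ZMod.val_natCast, ZMod.val_natCast, Nat.mod_eq_of_lt (lt a ha),
      Nat.mod_eq_of_lt (lt b hb)] at h2
  refine ⟨N, hNpos, hinj, ?_⟩
  have memTr : ∀ a s : ZMod N, s ∈ Tr T N a ↔ ∃ τ ∈ T, a = s - (τ : ZMod N) := by
    intro a s
    simp only [Tr, Finset.mem_image]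
    refine exists_congr fun τ => and_congr_right fun _ => ?_
    rw [eq_sub_iff_add_eq]
  have filt : ∀ s : ZMod N, (Finset.univ.filter (fun a => s ∈ Tr T N a)) =
      T.image (fun τ : ℤ => s - (τ : ZMod N)) := by
    intro s
    ext a
    simp only [memTr, Finset.mem_filter, Finset.mem_univ, true_and, Finset.mem_image]
    exact exists_congr fun τ => and_congr_right fun _ => eq_comm
  have hinj2 : ∀ s : ZMod N, Set.InjOn (fun τ : ℤ => s - (τ : ZMod N)) T := by
    intro s a ha b hb hab
    exact hinj ha hb (sub_right_injective hab)
  let w' : ZMod N → ℕ := fun a => (w (a + mn)).val + t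
  have hw' : ∀ s : ZMod N, ∃ u, ∑ τ ∈ T, w' (s - (τ : ZMod N)) = 1 + t * u := by
    intro s
    have h1 : ((∑ τ ∈ T, w' (s - (τ : ZMod N)) : ℕ) : ZMod t) = 1 := by
      rw [← hw s, Finset.sum_image hinj']
      push_cast
      refine Finset.sum_congr rfl (fun τ hτ => ?_)
      simp only [w', Nat.cast_add, ZMod.natCast_val, ZMod.cast_id, CharP.cast_eq_zero, add_zero]
      congr 1
      have h2 : (((τ - mn).toNat : ℕ) : ℤ) = τ - mn := Int.toNat_of_nonneg (by have := hle τ hτ; omega)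
      have h3 : (((τ - mn).toNat : ℕ) : ZMod N) = (τ : ZMod N) - mn := by
        have := congrArg (fun z : ℤ => (z : ZMod N)) h2
        simp only [Int.cast_natCast, Int.cast_sub] at this
        exact this
      rw [h3]; ring
    have h2 : 1 ≤ ∑ τ ∈ T, w' (s - (τ : ZMod N)) := by
      refine le_trans ?_ (Finset.single_le_sum (fun _ _ => Nat.zero_le _) hmT)
      simp only [w']; omega
    obtain ⟨k, hk⟩ := Nat.exists_eq_add_of_le h2
    rw [hk] at h1
    push_cast at h1
    have h3 : (k : ZMod t) = 0 := by linear_combination h1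
    rw [ZMod.natCast_eq_zero_iff] at h3
    obtain ⟨u, rfl⟩ := h3
    exact ⟨u, hk⟩
  choose u hu using hw'
  obtain ⟨v0, v1, hTool⟩ := exists_tool (F := Set.range (Tr T N)) (α := Σ a : ZMod N, Fin (w' a))
    (β := ZMod N) t htpos (Tr T N) (fun b => ⟨b, rfl⟩) (fun s => by
      rw [Nat.card_eq_fintype_card, Fintype.card_subtype, filt, Finset.card_image_of_injOn (hinj2 s)])
    (fun x => Tr T N x.1) (fun b => ⟨_, rfl⟩) u (fun s => by
      rw [← hu s, Nat.card_eq_fintype_card, Fintype.card_subtype,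
        ← Finset.sum_image (f := w') (g := fun τ : ℤ => s - (τ : ZMod N)) (hinj2 s), ← filt]
      have : (Finset.univ.filter (fun x : Σ a : ZMod N, Fin (w' a) => s ∈ Tr T N x.1)) =
          (Finset.univ.filter (fun a => s ∈ Tr T N a)).sigma (fun a => Finset.univ) := by
        ext x; simp
      rw [this, Finset.card_sigma]
      simp)
  refine good_univ hTool (fun s => ?_)
  refine ⟨Tr T N (s - mn), ⟨_, rfl⟩, ?_⟩
  rw [memTr]
  exact ⟨mn, hmT, rfl⟩

end covers

section assembly

/-- insert a vector in block `j` -/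
def ins {d n : ℕ} (j : Fin d) (v : Fin n → ℤ) : Fin (d * n) → ℤ :=
  fun k => if (finProdFinEquiv.symm k).1 = j then v (finProdFinEquiv.symm k).2 else 0

/-- the block `j` -/
def blk {d n : ℕ} (z : Fin (d * n) → ℤ) (j : Fin d) : Fin n → ℤ :=
  fun i => z (finProdFinEquiv (j, i))

theorem blk_add_ins_self {d n : ℕ} (z : Fin (d * n) → ℤ) (j : Fin d) (v : Fin n → ℤ) :
    blk (z + ins j v) j = blk z j + v := by
  funext i
  simp [blk, ins]

theorem blk_add_ins_ne {d n : ℕ} (z : Fin (d * n) → ℤ) {j j' : Fin d} (h : j' ≠ j)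
    (v : Fin n → ℤ) : blk (z + ins j v) j' = blk z j' := by
  funext i
  simp [blk, ins, h]

theorem ins_sub {d n : ℕ} (j : Fin d) (u v : Fin n → ℤ) :
    (ins j (u - v) : Fin (d * n) → ℤ) = ins j u - ins j v := by
  funext k
  simp only [ins, Pi.sub_apply]
  split_ifs <;> simp

theorem isIsoCopy_ins {d n : ℕ} (T : Set (Fin n → ℤ)) (j : Fin (d + 1))
    (b : Fin ((d + 1) * n) → ℤ) : IsIsoCopy T ((fun t => b + ins j t) '' T) := by
  classical
  refine ⟨(finProdFinEquiv.symm.trans ((Equiv.prodCongr (Equiv.swap 0 j) (Equiv.refl _)))).trans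
    finProdFinEquiv, fun _ => 1, b, fun _ => Or.inl rfl, ?_⟩
  refine Set.image_congr (fun t _ => ?_)
  funext k
  obtain ⟨⟨j', i⟩, rfl⟩ := finProdFinEquiv.surjective k
  simp only [Pi.add_apply, one_mul, add_comm (b _)]
  congr 1
  simp only [ins, Equiv.symm_apply_apply, Equiv.trans_apply, Equiv.prodCongr_apply, Prod.map_apply,
    Equiv.refl_apply, embed, finProdFinEquiv_apply_val]
  by_cases h : j' = j
  · subst h
    simp
  · have h1 : Equiv.swap 0 j j' ≠ 0 := by
      intro h2
      apply h
      have := congrArg (Equiv.swap 0 j) h2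
      simpa using this
    have h2 : 1 ≤ ((Equiv.swap 0 j j' : Fin (d + 1)) : ℕ) := by
      rw [Nat.one_le_iff_ne_zero]
      intro h3
      exact h1 (Fin.ext h3)
    have h4 : n * 1 ≤ n * ((Equiv.swap 0 j j' : Fin (d + 1)) : ℕ) := Nat.mul_le_mul_left _ h2
    rw [if_neg h, dif_neg (by omega)]

theorem main {n : ℕ} (T : Set (Fin n → ℤ)) (hfin : T.Finite) (hne : T.Nonempty) :
    ∃ d : ℕ, 1 ≤ d ∧
      ∃ P : Set (Set (Fin d → ℤ)),
        (∀ S ∈ P, IsIsoCopy T S) ∧ P.PairwiseDisjoint id ∧ ⋃₀ P = Set.univ := by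
  classical
  rcases Nat.eq_zero_or_pos n with hn | hn
  · subst hn
    refine ⟨1, le_rfl, Set.range (fun z => {z}), ?_, ?_, ?_⟩
    · rintro _ ⟨z, rfl⟩
      refine ⟨1, fun _ => 1, z, fun _ => Or.inl rfl, ?_⟩
      have : (fun t : Fin 0 → ℤ => fun j => 1 * embed t ((1 : Equiv.Perm (Fin 1)) j) + z j) =
          fun _ => z := by
        funext t j
        simp [embed]
      rw [this, hne.image_const]
    · rintro _ ⟨z, rfl⟩ _ ⟨z', rfl⟩ h
      simp only [Function.onFun, id, Set.disjoint_singleton]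
      rintro rfl
      exact h rfl
    · ext z
      simp
  obtain ⟨φ, hφ⟩ := exists_functional hfin.toFinset
  let T1 : Finset ℤ := hfin.toFinset.image φ
  obtain ⟨N, hN, hinj, J, c, hc⟩ := good_zmod T1 (by
    obtain ⟨v, hv⟩ := hne
    exact ⟨φ v, Finset.mem_image_of_mem _ (hfin.mem_toFinset.2 hv)⟩)
  have hinjT : ∀ u ∈ T, ∀ v ∈ T, ((φ u : ℤ) : ZMod N) = (φ v : ℤ) → u = v := by
    intro u hu v hv h
    have hu' := hfin.mem_toFinset.2 hu
    have hv' := hfin.mem_toFinset.2 hv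
    exact hφ hu' hv' (hinj (Finset.mem_image_of_mem _ hu') (Finset.mem_image_of_mem _ hv') h)
  set d := J.sup id with hd
  have hJd : ∀ j ∈ J, j < d + 1 := fun j hj => Nat.lt_succ_of_le (Finset.le_sup (f := id) hj)
  let Φ : (Fin ((d + 1) * n) → ℤ) → (ℕ → ZMod N) := fun z k =>
    if h : k < d + 1 then ((φ (blk z ⟨k, h⟩) : ℤ) : ZMod N) else 0
  have hΦ : ∀ z (j : Fin (d + 1)) v, Φ (z + ins j v) =
      update (Φ z) j (Φ z j + ((φ v : ℤ) : ZMod N)) := by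
    intro z j v
    funext k
    by_cases hk : k = j
    · subst hk
      have hj : ((j : ℕ) ≤ d) := Nat.le_of_lt_succ j.2
      simp [Φ, blk_add_ins_self, hj]
    · rw [update_of_ne hk]
      simp only [Φ]
      split_ifs with h
      · rw [blk_add_ins_ne]
        intro h1
        exact hk (congrArg Fin.val h1)
      · rfl
  -- data attached to a point
  let kk : (Fin ((d + 1) * n) → ℤ) → Fin (d + 1) := fun z =>
    ⟨(c (Φ z)).1, hJd _ (hc _ (Set.mem_univ _)).1⟩
  let aa : Finset (ZMod N) → ZMod N := fun D =>
    if h : ∃ a, Tr T1 N a = D then h.choose else 0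
  have haa : ∀ z, Tr T1 N (aa (c (Φ z)).2) = (c (Φ z)).2 := by
    intro z
    have h : ∃ a, Tr T1 N a = (c (Φ z)).2 := (hc (Φ z) (Set.mem_univ _)).2.1
    simp only [aa, h, dif_pos]
    exact h.choose_spec
  have hτ : ∀ z, ∃ τ ∈ T, Φ z (kk z) = aa (c (Φ z)).2 + ((φ τ : ℤ) : ZMod N) := by
    intro z
    have h := (hc (Φ z) (Set.mem_univ _)).2.2.1
    rw [← haa z] at h
    simp only [Tr, Finset.mem_image, T1] at h
    obtain ⟨_, ⟨τ, h1, rfl⟩, h2⟩ := h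
    exact ⟨τ, hfin.mem_toFinset.1 h1, h2.symm⟩
  choose τ hτT hτe using hτ
  let bb : (Fin ((d + 1) * n) → ℤ) → (Fin ((d + 1) * n) → ℤ) := fun z => z - ins (kk z) (τ z)
  have key : ∀ z, ∀ t ∈ T, kk (bb z + ins (kk z) t) = kk z ∧ bb (bb z + ins (kk z) t) = bb z := by
    intro z t ht
    have e1 : bb z + ins (kk z) t = z + ins (kk z) (t - τ z) := by
      simp only [bb, ins_sub]; abel
    set z' := bb z + ins (kk z) t with hz'
    have e2 : Φ z' = update (Φ z) (kk z) (aa (c (Φ z)).2 + ((φ t : ℤ) : ZMod N)) := by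
      rw [e1, hΦ, hτe z]
      congr 1
      rw [map_sub]; push_cast; ring
    have e3 : c (Φ z') = c (Φ z) := by
      rw [e2]
      refine ((hc (Φ z) (Set.mem_univ _)).2.2.2 _ ?_).2
      rw [← haa z]
      have := haa z
      simp only [Tr, Finset.mem_image, T1] at this ⊢
      rw [this]
      exact ⟨φ t, ⟨t, hfin.mem_toFinset.2 ht, rfl⟩, rfl⟩
    have e4 : kk z' = kk z := by
      apply Fin.ext
      simp only [kk, e3]
    refine ⟨e4, ?_⟩
    have e5 : τ z' = t := by
      refine hinjT _ (hτT _) _ ht ?_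
      have h1 := hτe z'
      rw [e4, e3, e2, update_self] at h1
      exact (add_left_cancel h1).symm
    have : bb z' = z' - ins (kk z') (τ z') := rfl
    rw [this, e4, e5, hz', add_sub_cancel_right]
  refine ⟨(d + 1) * n, Nat.mul_pos (Nat.succ_pos d) hn,
    Set.range (fun z => (fun t => bb z + ins (kk z) t) '' T), ?_, ?_, ?_⟩
  · rintro _ ⟨z, rfl⟩
    exact isIsoCopy_ins T _ _
  · rintro _ ⟨z, rfl⟩ _ ⟨z', rfl⟩ h
    simp only [Function.onFun, id]
    rw [Set.disjoint_left]
    rintro _ ⟨t, ht, rfl⟩ ⟨t', ht', h1⟩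
    apply h
    obtain ⟨h2, h3⟩ := key z t ht
    obtain ⟨h4, h5⟩ := key z' t' ht'
    simp only at h1 ⊢
    rw [h1] at h4 h5
    rw [h2.symm.trans h4, h3.symm.trans h5]
  · ext z
    simp only [Set.mem_sUnion, Set.mem_univ, iff_true]
    exact ⟨_, ⟨z, rfl⟩, τ z, hτT z, by simp [bb]⟩

end assembly

end TilingAux

/-- main theorem, Chalcraft's conjecture: every finite
non-empty tile `T ⊆ ℤ^n` tiles `ℤ^d` for some `d ≥ 1`: `ℤ^d` partitions into
isometric copies of `T`. -/
theorem tiling_with_arbitrary_tiles {n : ℕ} (T : Set (Fin n → ℤ))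
    (hfin : T.Finite) (hne : T.Nonempty) :
    ∃ d : ℕ, 1 ≤ d ∧
      ∃ P : Set (Set (Fin d → ℤ)),
        (∀ S ∈ P, IsIsoCopy T S) ∧ P.PairwiseDisjoint id ∧
        ⋃₀ P = Set.univ := by
  exact TilingAux.main T hfin hne
end
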